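/- The Littlewood-Richardson coefficient c^ν_{λμ} equals the number of pairs of column strict tableaux (S,T) where S has straight shape λ, T has straight shape μ, and the concatenated reading word read(S)read(T) is a lattice word of content ν. -/

import Mathlib

open scoped BigOperators
noncomputable section

/-- The ring of symmetric functions, presented as `ℚ[p₁, p₂, p₃, …]`,
with the variable `X k` representing the power sum `p_k` (the variable `X 0` is unused). -/
abbrev SymFn := MvPolynomial ℕ ℚ

/-- The power sum symmetric function `p_k`. -/
def pGen (k : ℕ) : SymFn := MvPolynomial.X k

/-- `p_λ` for a multiset of parts. -/
def pMul (m : Multiset ℕ) : SymFn := (m.map pGen).prod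

/-- `p_λ` for a partition `λ`. -/
def pPart {n : ℕ} (lam : n.Partition) : SymFn := pMul lam.parts

/-- `z_λ = ∏_i i^{m_i(λ)} m_i(λ)!`. -/
def zed {n : ℕ} (lam : n.Partition) : ℚ :=
  ∏ i ∈ Finset.range (n + 1),
    (i : ℚ) ^ (lam.parts.count i) * (Nat.factorial (lam.parts.count i))

/-- `z` of a monomial in the `p`-generators. -/
def zMon (m : ℕ →₀ ℕ) : ℚ :=
  ∏ i ∈ m.support, (i : ℚ) ^ (m i) * (Nat.factorial (m i))

/-- The Hall scalar product, determined by `⟨p_λ, p_μ⟩ = z_λ δ_{λμ}`. -/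
def hall (f g : SymFn) : ℚ :=
  ∑ m ∈ f.support, MvPolynomial.coeff m f * MvPolynomial.coeff m g * zMon m

/-- The complete homogeneous symmetric function `h_m = ∑_{λ ⊢ m} p_λ / z_λ`. -/
def hFn (m : ℕ) : SymFn := ∑ lam : m.Partition, (zed lam)⁻¹ • pPart lam

/-- `h_k` for an integer index, vanishing for negative `k`. -/
def hInt (k : ℤ) : SymFn := if 0 ≤ k then hFn k.toNat else 0

/-- The Schur function of a (finite, weakly decreasing) list of row lengths,
via the Jacobi–Trudi determinant `s_λ = det(h_{λ_i - i + j})`. -/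
def schurList (l : List ℕ) : SymFn :=
  Matrix.det (Matrix.of fun i j : Fin l.length =>
    hInt ((l.get i : ℤ) - (i : ℤ) + (j : ℤ)))

/-- The parts of a partition, sorted in weakly decreasing order. -/
def partList {n : ℕ} (lam : n.Partition) : List ℕ := (lam.parts.sort (· ≤ ·)).reverse

/-- The Schur function `s_λ`. -/
def schur {n : ℕ} (lam : n.Partition) : SymFn := schurList (partList lam)

/-- Evaluation `f(Ξ_ν)` of a symmetric function at the eigenvalues of a permutation
matrix of cycle type `ν`: the power sum `p_k` evaluates to `∑_{j ∈ ν, j ∣ k} j`. -/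
def xiEval {n : ℕ} (nu : n.Partition) (f : SymFn) : ℚ :=
  MvPolynomial.eval (fun k => ((nu.parts.filter (fun j => j ∣ k)).sum : ℚ)) f

/-- The character scalar product `⟨f, g⟩_@ = ∑_{ν ⊢ n} f(Ξ_ν) g(Ξ_ν) / z_ν`. -/
def atProd (n : ℕ) (f g : SymFn) : ℚ :=
  ∑ nu : n.Partition, xiEval nu f * xiEval nu g / zed nu

/-- The Frobenius-type map `φ_n(f) = ∑_{ν ⊢ n} f(Ξ_ν) p_ν / z_ν`. -/
def phi (n : ℕ) (f : SymFn) : SymFn :=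
  ∑ nu : n.Partition, (xiEval nu f / zed nu) • pPart nu

/-- The Kronecker (internal) product, determined by
`(p_λ/z_λ) ∗ (p_μ/z_μ) = δ_{λμ} p_λ/z_λ`. -/
def kron (f g : SymFn) : SymFn :=
  ∑ m ∈ f.support,
    MvPolynomial.monomial m (MvPolynomial.coeff m f * MvPolynomial.coeff m g * zMon m)

end


open scoped BigOperators
noncomputable section

/-- A (possibly skew) tableau, in French notation: `rows 0` is the bottom row.
`inn i` is the number of cells of the inner shape in row `i`, and `rows i`
lists the entries of row `i` from left to right. -/
structure SkewTab where
  inn : List ℕ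
  rows : List (List ℕ)

namespace SkewTab

/-- Inner shape of row `i`. -/
def innFn (T : SkewTab) (i : ℕ) : ℕ := T.inn.getD i 0

/-- Outer shape of row `i`. -/
def outFn (T : SkewTab) (i : ℕ) : ℕ := T.innFn i + (T.rows.getD i []).length

/-- The entry in row `i`, column `j` (for cells of the skew shape). -/
def entry (T : SkewTab) (i j : ℕ) : ℕ := (T.rows.getD i []).getD (j - T.innFn i) 0

/-- Column strict (skew) tableau: rows weakly increase left to right, columns
strictly increase bottom to top, entries are positive integers. -/
def IsSkewCST (T : SkewTab) : Prop :=
  T.inn.length = T.rows.length ∧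
  (∀ i, T.innFn (i + 1) ≤ T.innFn i) ∧
  (∀ i, T.outFn (i + 1) ≤ T.outFn i) ∧
  (T.rows ≠ [] → T.outFn (T.rows.length - 1) ≠ 0) ∧
  (∀ r ∈ T.rows, r.Chain' (· ≤ ·)) ∧
  (∀ r ∈ T.rows, ∀ x ∈ r, 0 < x) ∧
  (∀ i j, T.innFn (i + 1) ≤ j → j < T.outFn (i + 1) → T.innFn i ≤ j →
    T.entry i j < T.entry (i + 1) j)

/-- A column strict tableau of straight shape. -/
def IsCST (T : SkewTab) : Prop :=
  T.IsSkewCST ∧ T.inn = List.replicate T.rows.length 0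

/-- The (outer) shape of a straight-shape tableau, as the list of row lengths. -/
def shape (T : SkewTab) : List ℕ := T.rows.map List.length

/-- The reading word: rows are read bottom to top, each row right to left. -/
def read (T : SkewTab) : List ℕ := (T.rows.map List.reverse).flatten

/-- The number of occurrences of the letter `x` among the entries of `T`. -/
def contentCount (T : SkewTab) (x : ℕ) : ℕ := T.rows.flatten.count x

end SkewTab

/-- A word `w` (in the alphabet of positive integers) is lattice if every prefix
contains at least as many `i`'s as `(i+1)`'s, for every `i ≥ 1`. -/
def IsLatticeWord (w : List ℕ) : Prop :=
  ∀ p i, 1 ≤ i → (w.take p).count (i + 1) ≤ (w.take p).count i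

/-- A word has content `ν` (i.e. `{{1^{ν_1}, 2^{ν_2}, …}}`) if the letter `i+1`
occurs exactly `ν_{i+1}` times, where `ν` is given as a weakly decreasing list. -/
def HasContent (w : List ℕ) (l : List ℕ) : Prop :=
  ∀ i, w.count (i + 1) = l.getD i 0

/-- One elementary Knuth transformation. -/
inductive KnuthStep : List ℕ → List ℕ → Prop
  | k1 (u v : List ℕ) {x y z : ℕ} (h1 : x ≤ y) (h2 : y < z) :
      KnuthStep (u ++ x :: z :: y :: v) (u ++ z :: x :: y :: v)
  | k2 (u v : List ℕ) {x y z : ℕ} (h1 : x < y) (h2 : y ≤ z) :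
      KnuthStep (u ++ y :: x :: z :: v) (u ++ y :: z :: x :: v)

/-- Knuth (plactic) equivalence of words; two skew tableaux are jeu de taquin
equivalent exactly when their reading words are Knuth equivalent. -/
def KnuthEquiv : List ℕ → List ℕ → Prop := Relation.EqvGen KnuthStep

end

section HallAlgebra

open MvPolynomial Finset

theorem zMon_eq_prod {d : ℕ →₀ ℕ} {s : Finset ℕ} (hs : d.support ⊆ s) :
    zMon d = ∏ i ∈ s, (i : ℚ) ^ d i * (d i).factorial := by
  refine Finset.prod_subset hs fun i _ hi => ?_
  simp [Finsupp.notMem_support_iff.mp hi]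

theorem zMon_add_single (d : ℕ →₀ ℕ) (k : ℕ) :
    zMon (d + Finsupp.single k 1) = k * (d k + 1) * zMon d := by
  have h1 : (d + Finsupp.single k 1).support ⊆ insert k d.support := by
    intro i hi
    by_cases h : i = k
    · simp [h]
    · have : i ∈ d.support := by simpa [Finsupp.single_apply, Ne.symm h] using hi
      simp [this]
  rw [zMon_eq_prod h1, zMon_eq_prod (Finset.subset_insert k d.support),
    ← Finset.mul_prod_erase _ _ (Finset.mem_insert_self k d.support),
    ← Finset.mul_prod_erase _ _ (Finset.mem_insert_self k d.support)]
  have h2 : ∀ i ∈ (insert k d.support).erase k,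
      (i : ℚ) ^ (d + Finsupp.single k 1 : ℕ →₀ ℕ) i * ((d + Finsupp.single k 1 : ℕ →₀ ℕ) i).factorial
        = (i : ℚ) ^ d i * (d i).factorial := by
    intro i hi
    have : k ≠ i := fun h => by simp [h] at hi
    simp [this]
  rw [Finset.prod_congr rfl h2]
  simp only [Finsupp.add_apply, Finsupp.single_eq_same, Nat.factorial_succ, pow_succ]
  push_cast
  ring

theorem zMon_eq_zero {d : ℕ →₀ ℕ} (h : d 0 ≠ 0) : zMon d = 0 :=
  Finset.prod_eq_zero (Finsupp.mem_support_iff.mpr h) (by simp [h])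

theorem hall_eq_sum {f : SymFn} (g : SymFn) {s : Finset (ℕ →₀ ℕ)} (hs : f.support ⊆ s) :
    hall f g = ∑ m ∈ s, coeff m f * coeff m g * zMon m := by
  refine Finset.sum_subset hs fun i _ hi => ?_
  simp [MvPolynomial.notMem_support_iff.mp hi]

/-- The Hall scalar product as a bilinear map. -/
noncomputable def hallBilin : SymFn →ₗ[ℚ] SymFn →ₗ[ℚ] ℚ :=
  LinearMap.mk₂ ℚ hall
    (fun f f' g => by
      classical
      rw [hall_eq_sum g (MvPolynomial.support_add (p := f) (q := f')),
        hall_eq_sum g (Finset.subset_union_left (s₁ := f.support) (s₂ := f'.support)),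
        hall_eq_sum g (Finset.subset_union_right (s₁ := f.support) (s₂ := f'.support)),
        ← Finset.sum_add_distrib]
      exact Finset.sum_congr rfl fun m _ => by rw [coeff_add]; ring)
    (fun c f g => by
      rw [hall_eq_sum g (MvPolynomial.support_smul (a := c) (f := f)), hall, Finset.smul_sum]
      exact Finset.sum_congr rfl fun m _ => by rw [coeff_smul, smul_eq_mul, smul_eq_mul]; ring)
    (fun f g g' => by
      simp only [hall, ← Finset.sum_add_distrib]
      exact Finset.sum_congr rfl fun m _ => by rw [coeff_add]; ring)
    (fun c f g => by
      simp only [hall, Finset.smul_sum]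
      exact Finset.sum_congr rfl fun m _ => by rw [coeff_smul, smul_eq_mul, smul_eq_mul]; ring)

theorem hallBilin_apply (f g : SymFn) : hallBilin f g = hall f g := rfl

theorem hallBilin_monomial (d : ℕ →₀ ℕ) (a : ℚ) (g : SymFn) :
    hallBilin (monomial d a) g = a * coeff d g * zMon d := by
  rw [hallBilin_apply, hall_eq_sum g (MvPolynomial.support_monomial_subset (s := d) (a := a))]
  simp

/-- The adjoint of multiplication by `p_k` is `k ∂/∂p_k`. -/
theorem hallBilin_X_mul (k : ℕ) (f g : SymFn) :
    hallBilin (X k * f) g = k * hallBilin f (pderiv k g) := by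
  induction f using MvPolynomial.induction_on' with
  | monomial d a =>
    rw [X, monomial_mul, add_comm, hallBilin_monomial, hallBilin_monomial, zMon_add_single,
      coeff_pderiv]
    ring
  | add f f' h h' => rw [mul_add, map_add, map_add, LinearMap.add_apply, LinearMap.add_apply, h, h',
      mul_add]

/-- The degree of a monomial in the power sums. -/
def powerDegree (d : ℕ →₀ ℕ) : ℕ := d.sum fun i e => i * e

theorem powerDegree_add_single (d : ℕ →₀ ℕ) (k : ℕ) :
    powerDegree (d + Finsupp.single k 1) = powerDegree d + k := by
  unfold powerDegree
  rw [Finsupp.sum_add_index' (by simp) (by intros; ring), Finsupp.sum_single_index (by simp)]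
  simp

theorem powerDegree_toFinsupp (s : Multiset ℕ) : powerDegree (Multiset.toFinsupp s) = s.sum := by
  induction s using Multiset.induction_on with
  | empty => simp [powerDegree]
  | cons a s ih =>
    rw [← Multiset.singleton_add, map_add, add_comm, Multiset.toFinsupp_singleton,
      powerDegree_add_single, ih, Multiset.sum_add, Multiset.sum_singleton, add_comm]

theorem pMul_eq_monomial (s : Multiset ℕ) : pMul s = monomial (Multiset.toFinsupp s) 1 := by
  induction s using Multiset.induction_on with
  | empty => simp [pMul]
  | cons a s ih =>
    have : pMul (a ::ₘ s) = X a * pMul s := by simp [pMul, pGen]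
    rw [this, ih, X, monomial_mul, ← Multiset.singleton_add, map_add,
      Multiset.toFinsupp_singleton, one_mul]

theorem zed_eq_zMon {n : ℕ} (lam : n.Partition) : zed lam = zMon (Multiset.toFinsupp lam.parts) := by
  rw [zMon_eq_prod (s := Finset.range (n + 1))]
  · simp [zed]
  · intro i hi
    have : i ∈ lam.parts := by simpa using hi
    have := Nat.Partition.le_of_mem_parts this
    simp; omega

theorem coeff_hFn (m : ℕ) (d : ℕ →₀ ℕ) :
    coeff d (hFn m) = if powerDegree d = m then (zMon d)⁻¹ else 0 := by
  have h : coeff d (hFn m) = ∑ lam : m.Partition,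
      if Multiset.toFinsupp lam.parts = d then (zMon d)⁻¹ else 0 := by
    rw [hFn, coeff_sum]
    refine Finset.sum_congr rfl fun lam _ => ?_
    rw [coeff_smul, pPart, pMul_eq_monomial, coeff_monomial, zed_eq_zMon]
    split_ifs with h <;> simp [h]
  rw [h]
  by_cases h0 : d 0 = 0
  · split_ifs with hd
    · have hs : (Finsupp.toMultiset d).sum = m := by
        rw [← powerDegree_toFinsupp, Finsupp.toMultiset_toFinsupp, hd]
      rw [Finset.sum_eq_single (⟨Finsupp.toMultiset d, ?_, hs⟩ : m.Partition)]
      · simp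
      · intro lam _ hlam
        rw [if_neg]
        rintro rfl
        exact hlam (Nat.Partition.ext (by simp))
      · simp
      · intro i hi
        rcases Nat.eq_zero_or_pos i with rfl | hi'
        · simp [h0] at hi
        · exact hi'
    · refine Finset.sum_eq_zero fun lam _ => if_neg ?_
      rintro rfl
      exact hd (by rw [powerDegree_toFinsupp, lam.parts_sum])
  · simp [zMon_eq_zero h0]

theorem coeff_hInt (z : ℤ) (d : ℕ →₀ ℕ) :
    coeff d (hInt z) = if (powerDegree d : ℤ) = z then (zMon d)⁻¹ else 0 := by
  unfold hInt
  split_ifs with h h' h'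
  · rw [coeff_hFn, if_pos (by omega)]
  · rw [coeff_hFn, if_neg (by omega)]
  · omega
  · simp

theorem pderiv_hInt {k : ℕ} (hk : k ≠ 0) (z : ℤ) :
    (k : ℚ) • pderiv k (hInt z) = hInt (z - k) := by
  ext d
  rw [coeff_smul, coeff_pderiv, coeff_hInt, coeff_hInt, powerDegree_add_single, zMon_add_single]
  have : (k : ℚ) * (d k + 1) ≠ 0 := by positivity
  push_cast
  by_cases h : (powerDegree d : ℤ) + k = z
  · rw [if_pos h, if_pos (by omega), smul_eq_mul, mul_inv]
    field_simp
  · rw [if_neg h, if_neg (by omega)]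
    simp

theorem nsmul_hInt (m : ℕ) :
    (m : ℚ) • hInt m = ∑ k ∈ Finset.Icc 1 m, X k * hInt ((m : ℤ) - k) := by
  ext d
  rw [coeff_smul, coeff_hInt, coeff_sum]
  have key : ∀ k ∈ Finset.Icc 1 m, coeff d (X k * hInt ((m : ℤ) - k))
      = if powerDegree d = m then (k * d k : ℚ) * (zMon d)⁻¹ else 0 := by
    intro k hk
    have hk0 : k ≠ 0 := by simp at hk; omega
    rw [coeff_X_mul', coeff_hInt]
    by_cases hs : k ∈ d.support
    · obtain ⟨e, rfl⟩ : ∃ e, d = e + Finsupp.single k 1 := by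
        refine ⟨d - Finsupp.single k 1, (tsub_add_cancel_of_le ?_).symm⟩
        simpa [Finsupp.single_le_iff, Nat.one_le_iff_ne_zero] using hs
      rw [if_pos hs, add_tsub_cancel_right, powerDegree_add_single, zMon_add_single]
      have : (k : ℚ) * (e k + 1) ≠ 0 := by positivity
      by_cases h : powerDegree e + k = m
      · rw [if_pos h, if_pos (by omega), mul_inv]
        simp
        field_simp
      · rw [if_neg h, if_neg (by omega)]
    · rw [if_neg hs]
      simp [Finsupp.notMem_support_iff.mp hs]
  rw [Finset.sum_congr rfl key]
  by_cases h0 : d 0 ≠ 0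
  · simp [zMon_eq_zero h0]
  rw [not_not] at h0
  by_cases h : powerDegree d = m
  · simp only [h, if_true, ← Finset.sum_mul, smul_eq_mul]
    congr 1
    rw [← h]
    unfold powerDegree Finsupp.sum
    push_cast
    refine Finset.sum_subset (fun i hi => ?_) fun i _ hi => ?_
    · have h1 : d i ≠ 0 := by simpa using hi
      have h2 : i ≠ 0 := by rintro rfl; exact h1 h0
      have h3 : i * d i ≤ ∑ x ∈ d.support, x * d x :=
        Finset.single_le_sum (f := fun x => x * d x) (fun _ _ => Nat.zero_le _) hi
      have h4 : i * 1 ≤ i * d i := Nat.mul_le_mul_left _ (by omega)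
      simp only [Finset.mem_Icc]
      omega
    · simp [Finsupp.notMem_support_iff.mp hi]
  · simp [h]

end HallAlgebra

section AdjointRules

open MvPolynomial Finset

/-- The product `∏ⱼ h_{βⱼ}`. -/
noncomputable def hProd {ι : Type*} [Fintype ι] (β : ι → ℤ) : SymFn := ∏ j, hInt (β j)

theorem hInt_zero : hInt 0 = 1 := by
  simp [hInt, hFn, zed, pPart, pMul]

theorem pderiv_prod_hInt {ι : Type*} [DecidableEq ι] (s : Finset ι) {k : ℕ} (hk : k ≠ 0)
    (β : ι → ℤ) :
    (k : ℚ) • pderiv k (∏ j ∈ s, hInt (β j))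
      = ∑ j ∈ s, ∏ i ∈ s, hInt (β i - if i = j then (k : ℤ) else 0) := by
  induction s using Finset.induction_on with
  | empty => simp
  | insert a s ha ih =>
    rw [Finset.prod_insert ha, pderiv_mul, smul_add, ← smul_mul_assoc, pderiv_hInt hk,
      ← mul_smul_comm, ih, Finset.sum_insert ha, Finset.prod_insert ha, Finset.mul_sum]
    congr 1
    · rw [if_pos rfl]
      congr 1
      refine Finset.prod_congr rfl fun i hi => ?_
      rw [if_neg (by rintro rfl; exact ha hi), sub_zero]
    · refine Finset.sum_congr rfl fun j hj => ?_
      rw [Finset.prod_insert ha, if_neg (by rintro rfl; exact ha hj), sub_zero]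

theorem sum_Icc_piAntidiag_add_single {ι : Type*} [Fintype ι] [DecidableEq ι] (F : (ι → ℕ) → ℚ)
    (m : ℕ) (j : ι) :
    ∑ k ∈ Icc 1 m, ∑ γ ∈ piAntidiag univ (m - k), F (γ + Pi.single j k)
      = ∑ γ ∈ piAntidiag univ m, (γ j : ℚ) * F γ := by
  have h1 : ∀ γ ∈ piAntidiag (univ : Finset ι) m,
      (γ j : ℚ) * F γ = ∑ k ∈ Icc 1 m, if k ≤ γ j then F γ else 0 := by
    intro γ hγ
    have hle : γ j ≤ m := by
      rw [← (mem_piAntidiag.mp hγ).1]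
      exact Finset.single_le_sum (fun _ _ => Nat.zero_le _) (Finset.mem_univ j)
    have : (Icc 1 m).filter (fun k => k ≤ γ j) = Icc 1 (γ j) := by
      ext k; simp; omega
    rw [← Finset.sum_filter, this]
    simp
  rw [Finset.sum_congr rfl h1, Finset.sum_comm]
  refine Finset.sum_congr rfl fun k hk => ?_
  rw [← Finset.sum_filter]
  have hk' := Finset.mem_Icc.mp hk
  refine Finset.sum_bij' (fun γ _ => γ + Pi.single j k) (fun γ _ => γ - Pi.single j k) ?_ ?_ ?_ ?_ ?_
  · intro γ hγ
    simp only [mem_piAntidiag, Finset.mem_filter] at hγ ⊢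
    simp [Finset.sum_add_distrib, hγ.1]
    omega
  · intro γ hγ
    simp only [mem_piAntidiag, Finset.mem_filter] at hγ ⊢
    refine ⟨?_, by simp⟩
    have : γ = (γ - Pi.single j k) + Pi.single j k := by
      funext i
      by_cases h : i = j
      · subst h; simp [hγ.2]
      · simp [h]
    have h2 : univ.sum γ = univ.sum (γ - Pi.single j k) + k := by
      conv_lhs => rw [this]
      simp only [Pi.add_apply, Finset.sum_add_distrib, Finset.sum_pi_single', Finset.mem_univ,
        if_true]
    have h3 := hγ.1.1
    omega
  · intro γ _
    simp
  · intro γ hγ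
    funext i
    have := (Finset.mem_filter.mp hγ).2
    by_cases h : i = j
    · subst h; simp [this]
    · simp [h]
  · simp

/-- The adjoint of multiplication by `h_m`, applied to a product of complete homogeneous
functions. -/
theorem hallBilin_hInt_mul_hProd {ι : Type*} [Fintype ι] [DecidableEq ι] (m : ℕ) (f : SymFn)
    (β : ι → ℤ) :
    hallBilin (hInt m * f) (hProd β)
      = ∑ γ ∈ piAntidiag univ m, hallBilin f (hProd fun j => β j - (γ j : ℤ)) := by
  induction m using Nat.strong_induction_on generalizing β with
  | _ m ih =>
    rcases Nat.eq_zero_or_pos m with rfl | hm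
    · simp [hInt_zero]
    have hm' : (m : ℚ) ≠ 0 := by positivity
    refine mul_left_cancel₀ hm' ?_
    have h1 : (m : ℚ) * hallBilin (hInt m * f) (hProd β)
        = ∑ k ∈ Icc 1 m, ∑ j, ∑ γ ∈ piAntidiag univ (m - k),
            hallBilin f (hProd fun i => β i - ((γ + Pi.single j k : ι → ℕ) i : ℤ)) := by
      rw [← smul_eq_mul, ← LinearMap.smul_apply, ← map_smul, ← smul_mul_assoc, nsmul_hInt,
        Finset.sum_mul, map_sum, LinearMap.sum_apply]
      refine Finset.sum_congr rfl fun k hk => ?_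
      have hk' := Finset.mem_Icc.mp hk
      rw [mul_assoc, hallBilin_X_mul, ← smul_eq_mul, ← map_smul, hProd,
        pderiv_prod_hInt _ (by omega), map_sum]
      refine Finset.sum_congr rfl fun j _ => ?_
      have := ih (m - k) (by omega) (fun i => β i - if i = j then (k : ℤ) else 0)
      rw [Nat.cast_sub hk'.2] at this
      rw [hProd] at this
      rw [this]
      refine Finset.sum_congr rfl fun γ _ => ?_
      congr 2
      funext i
      by_cases h : i = j
      · subst h; simp; ring
      · simp [h]
    rw [h1, Finset.sum_comm]
    rw [Finset.sum_congr rfl fun j _ => sum_Icc_piAntidiag_add_single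
      (fun γ => hallBilin f (hProd fun i => β i - (γ i : ℤ))) m j]
    rw [Finset.sum_comm, Finset.mul_sum]
    refine Finset.sum_congr rfl fun γ hγ => ?_
    rw [← Finset.sum_mul, ← (mem_piAntidiag.mp hγ).1]
    push_cast
    rfl

theorem hallBilin_one_hProd {ι : Type*} [Fintype ι] (β : ι → ℤ) :
    hallBilin 1 (hProd β) = ∏ j, if β j = 0 then 1 else 0 := by
  have h1 : (1 : SymFn) = monomial 0 1 := rfl
  rw [h1, hallBilin_monomial, ← constantCoeff_eq, hProd, map_prod]
  have : zMon 0 = 1 := by simp [zMon]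
  rw [this, one_mul, mul_one]
  refine Finset.prod_congr rfl fun j _ => ?_
  rw [constantCoeff_eq, coeff_hInt]
  simp [powerDegree, this, eq_comm]

theorem hInt_of_neg {z : ℤ} (h : z < 0) : hInt z = 0 := if_neg (by omega)

end AdjointRules

section Pieri

open MvPolynomial Finset

theorem sum_eq_zero_of_indexed_involution {ι α : Type*} [LinearOrder ι] [WellFoundedLT ι]
    (s : Finset α) (f : α → ℚ) (P : ι → α → Prop) (t : ι → α → α)
    (hP : ∀ a ∈ s, ∃ j, P j a)
    (ht : ∀ j, ∀ a ∈ s, P j a → (∀ i < j, ¬ P i a) →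
      t j a ∈ s ∧ P j (t j a) ∧ (∀ i < j, ¬ P i (t j a)) ∧ t j (t j a) = a ∧ f (t j a) = -f a) :
    ∑ a ∈ s, f a = 0 := by
  classical
  have hmin : ∀ a ∈ s, ∃ j, P j a ∧ ∀ i < j, ¬ P i a := by
    intro a ha
    have hwf : WellFounded ((· < ·) : ι → ι → Prop) := wellFounded_lt
    exact ⟨hwf.min {j | P j a} (hP a ha), hwf.min_mem {j | P j a} (hP a ha),
      fun i hi h => hwf.not_lt_min {j | P j a} h hi⟩
  rcases s.eq_empty_or_nonempty with rfl | ⟨a₀, ha₀⟩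
  · simp
  have : Nonempty ι := ⟨(hP a₀ ha₀).choose⟩
  choose! J hJ using hmin
  have huniq : ∀ a ∈ s, J (t (J a) a) = J a := by
    intro a ha
    obtain ⟨h1, h2, h3, -, -⟩ := ht (J a) a ha (hJ a ha).1 (hJ a ha).2
    obtain ⟨h4, h5⟩ := hJ _ h1
    rcases lt_trichotomy (J (t (J a) a)) (J a) with h | h | h
    · exact absurd h4 (h3 _ h)
    · exact h
    · exact absurd h2 (h5 _ h)
  refine Finset.sum_involution (fun a _ => t (J a) a) ?_ ?_ ?_ ?_
  · intro a ha
    rw [(ht (J a) a ha (hJ a ha).1 (hJ a ha).2).2.2.2.2]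
    ring
  · intro a ha hne heq
    have := (ht (J a) a ha (hJ a ha).1 (hJ a ha).2).2.2.2.2
    rw [heq] at this
    apply hne
    linarith
  · intro a ha
    exact (ht (J a) a ha (hJ a ha).1 (hJ a ha).2).1
  · intro a ha
    rw [huniq a ha]
    exact (ht (J a) a ha (hJ a ha).1 (hJ a ha).2).2.2.2.1

theorem sum_congr_of_pair {ι M : Type*} [DecidableEq ι] [AddCommMonoid M] {s : Finset ι}
    {x y : ι} (hx : x ∈ s) (hy : y ∈ s) (hxy : x ≠ y) {f g : ι → M} (h : f x + f y = g x + g y)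
    (hfg : ∀ i, i ≠ x → i ≠ y → f i = g i) : ∑ i ∈ s, f i = ∑ i ∈ s, g i := by
  have hy' : y ∈ s.erase x := Finset.mem_erase.mpr ⟨hxy.symm, hy⟩
  rw [← Finset.add_sum_erase _ _ hx, ← Finset.add_sum_erase _ _ hy', ← add_assoc, h,
    ← Finset.add_sum_erase _ g hx, ← Finset.add_sum_erase _ g hy', ← add_assoc]
  congr 1
  refine Finset.sum_congr rfl fun i hi => hfg i ?_ ?_
  · simp only [Finset.mem_erase] at hi; exact hi.2.1
  · simp only [Finset.mem_erase] at hi; exact hi.1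

/-- The Jacobi–Trudi determinant of an arbitrary integer vector of length `N`. -/
noncomputable def jtDet (N : ℕ) (κ : ℕ → ℤ) : SymFn :=
  Matrix.det (Matrix.of fun i j : Fin N => hInt (κ i - (i : ℤ) + (j : ℤ)))

theorem jtDet_eq_sum (N : ℕ) (κ : ℕ → ℤ) :
    jtDet N κ = ∑ σ : Equiv.Perm (Fin N), ((Equiv.Perm.sign σ : ℤ) : ℚ) •
      hProd fun j : Fin N => κ (σ j) - ((σ j : ℕ) : ℤ) + ((j : ℕ) : ℤ) := by
  rw [jtDet, Matrix.det_apply']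
  refine Finset.sum_congr rfl fun σ _ => ?_
  rw [hProd, Int.cast_smul_eq_zsmul, zsmul_eq_mul]
  rfl

theorem schurList_eq_jtDet (l : List ℕ) :
    schurList l = jtDet l.length fun i => (l.getD i 0 : ℤ) := by
  unfold schurList jtDet
  congr
  ext i j
  simp

theorem jtDet_eq_zero {N : ℕ} {κ : ℕ → ℤ} (hN : 0 < N) (h : κ (N - 1) < 0) : jtDet N κ = 0 := by
  refine Matrix.det_eq_zero_of_row_eq_zero ⟨N - 1, by omega⟩ fun j => ?_
  simp only [Matrix.of_apply]
  have := j.2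
  exact hInt_of_neg (by omega)

/-- The straightening rule `s_{(…,a,b,…)} = -s_{(…,b-1,a+1,…)}`. -/
theorem jtDet_straighten {N : ℕ} {κ κ' : ℕ → ℤ} {j : ℕ} (hj : j + 1 < N)
    (h1 : κ' j = κ (j + 1) - 1) (h2 : κ' (j + 1) = κ j + 1)
    (h3 : ∀ i, i ≠ j → i ≠ j + 1 → κ' i = κ i) : jtDet N κ' = -jtDet N κ := by
  let a : Fin N := ⟨j, by omega⟩
  let b : Fin N := ⟨j + 1, hj⟩
  have hab : a ≠ b := by simp [a, b, Fin.ext_iff]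
  have := Matrix.det_permute (Equiv.swap a b)
    (Matrix.of fun i j : Fin N => hInt (κ i - (i : ℤ) + (j : ℤ)))
  rw [Equiv.Perm.sign_swap hab] at this
  unfold jtDet
  rw [show -(Matrix.of fun i j : Fin N => hInt (κ i - (i : ℤ) + (j : ℤ))).det = _ from
    (by simpa using this.symm)]
  congr 1
  ext i c : 1
  simp only [Matrix.of_apply, Matrix.submatrix_apply, id]
  congr 2
  by_cases hia : i = a
  · subst hia
    rw [Equiv.swap_apply_left]
    simp only [a, b]; push_cast; omega
  by_cases hib : i = b
  · subst hib
    rw [Equiv.swap_apply_right]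
    simp only [a, b]; push_cast; omega
  · rw [Equiv.swap_apply_of_ne_of_ne hia hib, h3]
    · intro h; exact hia (Fin.ext h)
    · intro h; exact hib (Fin.ext h)

theorem sum_piAntidiag_range {M : Type*} [AddCommMonoid M] (N m : ℕ) (F : (Fin N → ℕ) → M) :
    ∑ γ ∈ piAntidiag (univ : Finset (Fin N)) m, F γ
      = ∑ γ ∈ piAntidiag (range N) m, F fun i => γ i := by
  symm
  refine Finset.sum_bij' (fun γ _ i => γ i) (fun γ _ i => if h : i < N then γ ⟨i, h⟩ else 0)
    ?_ ?_ ?_ ?_ ?_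
  · intro γ hγ
    simp only [mem_piAntidiag] at hγ ⊢
    refine ⟨?_, by simp⟩
    rw [← hγ.1, Finset.sum_range]
  · intro γ hγ
    simp only [mem_piAntidiag] at hγ ⊢
    refine ⟨?_, fun i hi => ?_⟩
    · rw [← hγ.1, Finset.sum_range]
      simp
    · by_contra h
      simp at h
      simp [Nat.not_lt.mpr h] at hi
  · intro γ hγ
    funext i
    simp only [mem_piAntidiag] at hγ
    split_ifs with h
    · rfl
    · by_contra h'
      exact h (Finset.mem_range.mp (hγ.2 i (Ne.symm h')))
  · intro γ _
    funext i
    simp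
  · simp

theorem hallBilin_hInt_mul_jtDet (N m : ℕ) (f : SymFn) (κ : ℕ → ℤ) :
    hallBilin (hInt m * f) (jtDet N κ)
      = ∑ γ ∈ piAntidiag (range N) m, hallBilin f (jtDet N fun i => κ i - (γ i : ℤ)) := by
  refine Eq.trans ?_ (sum_piAntidiag_range N m fun γ => hallBilin f (Matrix.det (Matrix.of
    fun i j : Fin N => hInt (κ i - (γ i : ℤ) - (i : ℤ) + (j : ℤ)))))
  rw [jtDet_eq_sum]
  simp only [map_sum, map_smul, hallBilin_hInt_mul_hProd, Matrix.det_apply']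
  conv_rhs => rw [Finset.sum_comm]
  simp only [Finset.smul_sum]
  refine Finset.sum_congr rfl fun σ _ => ?_
  refine Finset.sum_bij' (fun γ _ => γ ∘ σ.symm) (fun γ _ => γ ∘ σ) ?_ ?_ ?_ ?_ ?_
  · intro γ hγ
    simp only [mem_piAntidiag] at hγ ⊢
    exact ⟨by rw [← hγ.1]; exact Equiv.sum_comp σ.symm γ, by simp⟩
  · intro γ hγ
    simp only [mem_piAntidiag] at hγ ⊢
    exact ⟨by rw [← hγ.1]; exact Equiv.sum_comp σ γ, by simp⟩
  · intro γ _; funext i; simp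
  · intro γ _; funext i; simp
  · intro γ _
    rw [← map_smul, Int.cast_smul_eq_zsmul, zsmul_eq_mul, hProd]
    congr 2
    refine Finset.prod_congr rfl fun j _ => ?_
    simp only [Matrix.of_apply, Function.comp, Equiv.symm_apply_apply]
    congr 1
    ring

/-- The dual Pieri rule: `h_m^⊥ s_ν` is the sum of `s_κ` over horizontal strips `ν/κ`. -/
theorem hallBilin_hInt_mul_jtDet_antitone (N m : ℕ) (f : SymFn) {ν : ℕ → ℤ} (hν : Antitone ν)
    (hν0 : ∀ k, N ≤ k → ν k = 0) :
    hallBilin (hInt m * f) (jtDet N ν)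
      = ∑ γ ∈ (piAntidiag (range N) m).filter (fun γ => ∀ k < N, ν (k + 1) ≤ ν k - (γ k : ℤ)),
          hallBilin f (jtDet N fun i => ν i - (γ i : ℤ)) := by
  classical
  rw [hallBilin_hInt_mul_jtDet, ← Finset.sum_filter_add_sum_filter_not (piAntidiag (range N) m)
    (fun γ => ∀ k < N, ν (k + 1) ≤ ν k - (γ k : ℤ)), add_eq_left]
  refine sum_eq_zero_of_indexed_involution (ι := ℕ) _ _
    (fun j γ => j < N ∧ ν j - (γ j : ℤ) < ν (j + 1))
    (fun j γ => if j + 1 < N then (fun i => if i = j then (ν j - ν (j + 1)).toNat + γ (j + 1) + 1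
      else if i = j + 1 then γ j - (ν j - ν (j + 1)).toNat - 1 else γ i) else γ) ?_ ?_
  · intro γ hγ
    simpa using (Finset.mem_filter.mp hγ).2
  · rintro j γ hγ ⟨hjN, hj⟩ hmin
    simp only [Finset.mem_filter, mem_piAntidiag, Finset.mem_range] at hγ ⊢
    have hd : 0 ≤ ν j - ν (j + 1) := sub_nonneg.mpr (hν (Nat.le_succ j))
    obtain ⟨d, hd⟩ := Int.eq_ofNat_of_zero_le hd
    rw [hd, Int.toNat_natCast]
    have hdγ : d + 1 ≤ γ j := by omega
    by_cases hj1 : j + 1 < N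
    swap
    · simp only [if_neg hj1]
      refine ⟨hγ, ⟨hjN, hj⟩, hmin, trivial, ?_⟩
      have : N - 1 = j := by omega
      rw [jtDet_eq_zero (by omega)]
      · simp
      · rw [this]
        have := hν0 (j + 1) (by omega)
        omega
    simp only [if_pos hj1, if_true]
    refine ⟨⟨⟨?_, ?_⟩, ?_⟩, ⟨hjN, ?_⟩, ?_, ?_, ?_⟩
    · rw [← hγ.1.1]
      refine sum_congr_of_pair (x := j) (y := j + 1) (by simpa using hjN) (by simpa using hj1)
        (by omega) ?_ ?_
      · simp; omega
      · intro i h1 h2; simp [h1, h2]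
    · intro i hi
      by_cases h1 : i = j
      · omega
      by_cases h2 : i = j + 1
      · omega
      simp only [h1, h2, if_false] at hi
      exact hγ.1.2 i hi
    · intro h
      have := h j hjN
      simp at this
      omega
    · push_cast; omega
    · intro i hi
      have := hmin i hi
      rw [if_neg (by omega), if_neg (by omega)]
      exact this
    · funext i
      simp
      split_ifs with h1 h2
      · subst h1; omega
      · subst h2; omega
      · rfl
    · rw [jtDet_straighten (κ := fun i => ν i - (γ i : ℤ)) hj1]
      · simp
      · simp; omega
      · simp; omega
      · intro i h1 h2; simp [h1, h2]

end Pieri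

section StripChains

open Finset

/-- `K 0 ⊆ K 1 ⊆ ⋯ ⊆ K r = ν` is a chain of partitions with at most `N` rows, starting at the
empty partition, in which consecutive partitions differ by horizontal strips. The chain is
prolonged constantly beyond `r`. -/
structure IsStripChain (N r : ℕ) (ν : ℕ → ℤ) (K : ℕ → ℕ → ℤ) : Prop where
  zero : ∀ k, K 0 k = 0
  le_succ : ∀ i k, K i k ≤ K (i + 1) k
  strip : ∀ i k, K (i + 1) (k + 1) ≤ K i k
  stable : ∀ i, r ≤ i → K i = ν
  support : ∀ k, N ≤ k → ν k = 0

namespace IsStripChain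

variable {N r : ℕ} {ν : ℕ → ℤ} {K : ℕ → ℕ → ℤ}

theorem mono (h : IsStripChain N r ν K) {i j : ℕ} (hij : i ≤ j) (k : ℕ) : K i k ≤ K j k :=
  monotone_nat_of_le_succ (f := fun i => K i k) (fun i => h.le_succ i k) hij

theorem nonneg (h : IsStripChain N r ν K) (i k : ℕ) : 0 ≤ K i k := by
  rw [← h.zero k]; exact h.mono (Nat.zero_le i) k

theorem le_shape (h : IsStripChain N r ν K) (i k : ℕ) : K i k ≤ ν k := by
  rw [← h.stable (max i r) (le_max_right _ _)]; exact h.mono (le_max_left _ _) k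

theorem antitone_row (h : IsStripChain N r ν K) (i : ℕ) : Antitone (K i) :=
  antitone_nat_of_succ_le fun k => (h.le_succ i (k + 1)).trans (h.strip i k)

theorem eq_zero (h : IsStripChain N r ν K) (i : ℕ) {k : ℕ} (hk : N ≤ k) : K i k = 0 :=
  le_antisymm (h.support k hk ▸ h.le_shape i k) (h.nonneg i k)

end IsStripChain

theorem finite_isStripChain (N r : ℕ) (ν : ℕ → ℤ) : {K | IsStripChain N r ν K}.Finite := by
  let g : (Fin r → Fin N → Fin ((ν 0).toNat + 1)) → ℕ → ℕ → ℤ := fun x i k =>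
    if hi : i < r then (if hk : k < N then (x ⟨i, hi⟩ ⟨k, hk⟩ : ℕ) else 0) else ν k
  refine (Set.finite_range g).subset fun K hK => ?_
  have hK : IsStripChain N r ν K := hK
  have hb : ∀ i k, (K i k).toNat < (ν 0).toNat + 1 := fun i k => by
    have h1 := hK.antitone_row i (Nat.zero_le k)
    have h2 := hK.le_shape i 0
    omega
  refine ⟨fun i k => ⟨(K i k).toNat, hb i k⟩, ?_⟩
  funext i k
  simp only [g]
  split_ifs with hi hk
  · exact Int.toNat_of_nonneg (hK.nonneg i k)
  · exact (hK.eq_zero i (by omega)).symm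
  · rw [hK.stable i (by omega)]

/-- The finite set of chains of horizontal strips from the empty partition to `ν`. -/
noncomputable def stripChains (N r : ℕ) (ν : ℕ → ℤ) : Finset (ℕ → ℕ → ℤ) :=
  (finite_isStripChain N r ν).toFinset

theorem mem_stripChains {N r : ℕ} {ν : ℕ → ℤ} {K : ℕ → ℕ → ℤ} :
    K ∈ stripChains N r ν ↔ IsStripChain N r ν K := by
  simp [stripChains]

/-- The number of cells in the `i`-th strip of a chain. -/
def stripSize (N : ℕ) (K : ℕ → ℕ → ℤ) (i : ℕ) : ℤ := ∑ k ∈ range N, (K (i + 1) k - K i k)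

theorem det_ite_sub_eq {n : ℕ} {w l : ℕ → ℤ} (hw : ∀ i j, i ≤ j → j < n → w j ≤ w i)
    (hl : ∀ i j, i ≤ j → j < n → l j ≤ l i) :
    ∑ σ : Equiv.Perm (Fin n), ((Equiv.Perm.sign σ : ℤ) : ℚ) *
        ∏ j : Fin n, (if w j = l (σ j) - ((σ j : ℕ) : ℤ) + ((j : ℕ) : ℤ) then (1 : ℚ) else 0)
      = if ∀ i < n, w i = l i then 1 else 0 := by
  have key : ∀ σ : Equiv.Perm (Fin n),
      (∀ j : Fin n, w j = l (σ j) - ((σ j : ℕ) : ℤ) + ((j : ℕ) : ℤ)) → σ = 1 := by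
    intro σ h
    have hmono : StrictMono σ := by
      intro a b hab
      by_contra hle
      have hne : σ a ≠ σ b := fun h => hab.ne (σ.injective h)
      have hlt : σ b < σ a := lt_of_le_of_ne (not_lt.mp hle) hne.symm
      have h1 := h a
      have h2 := h b
      have h3 := hw a b hab.le b.2
      have h4 := hl (σ b) (σ a) hlt.le (σ a).2
      have h5 : (a : ℕ) < b := hab
      have h6 : (σ b : ℕ) < σ a := hlt
      omega
    have : StrictMono.orderIsoOfSurjective σ hmono σ.surjective = OrderIso.refl _ :=
      Subsingleton.elim _ _
    ext i
    have := congrArg (fun e : Fin n ≃o Fin n => e i) this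
    simpa using congrArg Fin.val this
  rw [Finset.sum_eq_single 1]
  · split_ifs with h
    · rw [Finset.prod_eq_one]
      · simp
      · intro j _
        simp [h j j.2]
    · push Not at h
      obtain ⟨i, hi, hne⟩ := h
      rw [Finset.prod_eq_zero (Finset.mem_univ ⟨i, hi⟩), mul_zero]
      simpa using hne
  · intro σ _ hσ
    have : ∃ j : Fin n, ¬ w j = l (σ j) - ((σ j : ℕ) : ℤ) + ((j : ℕ) : ℤ) := by
      by_contra h
      push Not at h
      exact hσ (key σ h)
    obtain ⟨j, hj⟩ := this
    rw [Finset.prod_eq_zero (Finset.mem_univ j) (if_neg hj), mul_zero]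
  · simp

theorem hallBilin_one_jtDet {N : ℕ} {ν : ℕ → ℤ} (hν : Antitone ν) :
    hallBilin 1 (jtDet N ν) = if ∀ i < N, 0 = ν i then 1 else 0 := by
  rw [← det_ite_sub_eq (w := fun _ => 0) (fun _ _ _ _ => le_rfl) fun i j hij _ => hν hij,
    jtDet_eq_sum]
  simp only [map_sum, map_smul, hallBilin_one_hProd, smul_eq_mul]
  simp only [eq_comm]

theorem isStripChain_zero_iff {N : ℕ} {ν : ℕ → ℤ} {K : ℕ → ℕ → ℤ} :
    IsStripChain N 0 ν K ↔ ν = 0 ∧ K = 0 := by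
  constructor
  · intro h
    have h0 : ν = 0 := by
      rw [← h.stable 0 le_rfl]; funext k; exact h.zero k
    exact ⟨h0, by funext i; rw [h.stable i (Nat.zero_le i), h0]; rfl⟩
  · rintro ⟨rfl, rfl⟩
    constructor <;> simp

/-- Cutting the last strip off a chain. -/
theorem IsStripChain.truncate {N r : ℕ} {ν : ℕ → ℤ} {K : ℕ → ℕ → ℤ}
    (h : IsStripChain N (r + 1) ν K) : IsStripChain N r (K r) fun i => K (min i r) := by
  refine ⟨by simpa using h.zero, fun i k => h.mono (by omega) k, fun i k => ?_, fun i hi => ?_,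
    fun k hk => h.eq_zero r hk⟩
  · rcases lt_or_ge i r with hi | hi
    · have h1 : min (i + 1) r = i + 1 := by omega
      have h2 : min i r = i := by omega
      simp only [h1, h2]
      exact h.strip i k
    · have h1 : min (i + 1) r = r := by omega
      have h2 : min i r = r := by omega
      simp only [h1, h2]
      exact h.antitone_row r (Nat.le_succ k)
  · simp [hi]

/-- Adding a last strip to a chain. -/
theorem IsStripChain.extend {N r : ℕ} {κ ν : ℕ → ℤ} {K : ℕ → ℕ → ℤ}
    (h : IsStripChain N r κ K) (hν : Antitone ν) (hν0 : ∀ k, N ≤ k → ν k = 0)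
    (hle : ∀ k, κ k ≤ ν k) (hs : ∀ k, ν (k + 1) ≤ κ k) :
    IsStripChain N (r + 1) ν fun i => if i ≤ r then K i else ν := by
  refine ⟨by simpa using h.zero, fun i k => ?_, fun i k => ?_, fun i hi => by simp; omega, hν0⟩
  · rcases lt_trichotomy i r with hi | rfl | hi
    · rw [if_pos hi.le, if_pos (by omega)]
      exact h.le_succ i k
    · rw [if_pos le_rfl, if_neg (by omega), h.stable i le_rfl]
      exact hle k
    · rw [if_neg (by omega), if_neg (by omega)]
  · rcases lt_trichotomy i r with hi | rfl | hi
    · rw [if_pos hi.le, if_pos (by omega)]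
      exact h.strip i k
    · rw [if_pos le_rfl, if_neg (by omega), h.stable i le_rfl]
      exact hs k
    · rw [if_neg (by omega), if_neg (by omega)]
      exact hν (Nat.le_succ k)

/-- `⟨h_α, s_ν⟩` counts chains of horizontal strips of sizes `α`. -/
theorem hallBilin_prod_hInt_jtDet (N r : ℕ) (α : ℕ → ℤ) {ν : ℕ → ℤ} (hν : Antitone ν)
    (hν0 : ∀ k, N ≤ k → ν k = 0) :
    hallBilin (∏ i ∈ range r, hInt (α i)) (jtDet N ν)
      = ((stripChains N r ν).filter fun K => ∀ i < r, stripSize N K i = α i).card := by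
  induction r generalizing ν with
  | zero =>
    rw [Finset.prod_range_zero, hallBilin_one_jtDet hν]
    split_ifs with h
    · have h0 : ν = 0 := by
        funext k
        rcases lt_or_ge k N with hk | hk
        · exact (h k hk).symm
        · exact hν0 k hk
      symm
      norm_cast
      rw [Finset.card_eq_one]
      refine ⟨0, ?_⟩
      ext K
      simp [mem_stripChains, isStripChain_zero_iff, h0]
    · symm
      norm_cast
      rw [Finset.card_eq_zero, Finset.filter_eq_empty_iff]
      intro K hK
      have h1 := (isStripChain_zero_iff.mp (mem_stripChains.mp hK)).1
      exact absurd (fun i _ => by simp [h1]) h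
  | succ r ih =>
    rw [Finset.prod_range_succ, mul_comm]
    rcases lt_or_ge (α r) 0 with hneg | hpos
    · rw [hInt_of_neg hneg, zero_mul, map_zero, LinearMap.zero_apply, Finset.card_eq_zero.mpr]
      · simp
      · refine Finset.filter_eq_empty_iff.mpr fun K hK h => ?_
        have hK := mem_stripChains.mp hK
        have h1 : 0 ≤ stripSize N K r :=
          Finset.sum_nonneg fun k _ => sub_nonneg.mpr (hK.le_succ r k)
        rw [h r (Nat.lt_succ_self r)] at h1
        omega
    · obtain ⟨m, hm⟩ := Int.eq_ofNat_of_zero_le hpos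
      rw [hm, hallBilin_hInt_mul_jtDet_antitone N m _ hν hν0]
      have := Classical.decEq (ℕ → ℕ)
      have hmaps : ∀ K ∈ (stripChains N (r + 1) ν).filter
          (fun K => ∀ i < r + 1, stripSize N K i = α i),
          (fun k => (ν k - K r k).toNat) ∈ (piAntidiag (range N) m).filter
            (fun γ => ∀ k < N, ν (k + 1) ≤ ν k - (γ k : ℤ)) := by
        intro K hK
        obtain ⟨hK, hsz⟩ := Finset.mem_filter.mp hK
        have hK := mem_stripChains.mp hK
        have hsz := hsz r (Nat.lt_succ_self r)
        have hcast : ∀ k, (((ν k - K r k).toNat : ℕ) : ℤ) = ν k - K r k := fun k =>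
          Int.toNat_of_nonneg (sub_nonneg.mpr (hK.le_shape r k))
        simp only [Finset.mem_filter, mem_piAntidiag, Finset.mem_range]
        refine ⟨⟨?_, fun k hk => ?_⟩, fun k _ => ?_⟩
        · zify
          simp only [hcast]
          rw [← hm, ← hsz, stripSize, hK.stable (r + 1) le_rfl]
        · by_contra hk'
          rw [not_lt] at hk'
          apply hk
          rw [hK.eq_zero r hk', hν0 k hk']
          rfl
        · rw [hcast]
          have := hK.strip r k
          rw [hK.stable (r + 1) le_rfl] at this
          omega
      rw [Finset.card_eq_sum_card_fiberwise hmaps, Nat.cast_sum]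
      refine Finset.sum_congr rfl fun γ hγ => ?_
      simp only [Finset.mem_filter, mem_piAntidiag, Finset.mem_range] at hγ
      obtain ⟨⟨hγm, hγs⟩, hγ⟩ := hγ
      have hs : ∀ k, ν (k + 1) ≤ ν k - (γ k : ℤ) := by
        intro k
        rcases lt_or_ge k N with hk | hk
        · exact hγ k hk
        · have : γ k = 0 := by
            by_contra h; have := hγs k h; omega
          rw [this]
          simpa using hν (Nat.le_succ k)
      have hanti : Antitone fun k => ν k - (γ k : ℤ) := antitone_nat_of_succ_le fun k => by
        have := hs k; omega
      have hzero : ∀ k, N ≤ k → ν k - (γ k : ℤ) = 0 := fun k hk => by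
        have : γ k = 0 := by
          by_contra h; have := hγs k h; omega
        rw [this, hν0 k hk]; rfl
      rw [ih hanti hzero]
      congr 1
      symm
      refine Finset.card_nbij' (fun K i => K (min i r)) (fun K i => if i ≤ r then K i else ν)
        ?_ ?_ ?_ ?_
      · intro K hK
        simp only [Finset.coe_filter, Finset.mem_filter, mem_stripChains, Set.mem_ofPred_eq]
          at hK ⊢
        obtain ⟨⟨hK, hsz⟩, hf⟩ := hK
        have hKr : K r = fun k => ν k - (γ k : ℤ) := by
          funext k
          rw [← hf]
          have := hK.le_shape r k
          simp only
          omega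
        refine ⟨hKr ▸ hK.truncate, fun i hi => ?_⟩
        rw [← hsz i (by omega)]
        unfold stripSize
        beta_reduce
        rw [show min (i + 1) r = i + 1 by omega, show min i r = i by omega]
      · intro K hK
        simp only [Finset.coe_filter, Finset.mem_filter, mem_stripChains, Set.mem_ofPred_eq]
          at hK ⊢
        obtain ⟨hK, hsz⟩ := hK
        refine ⟨⟨hK.extend hν hν0 (fun k => by simp) hs, fun i hi => ?_⟩, ?_⟩
        · unfold stripSize
          beta_reduce
          rcases Nat.lt_succ_iff_lt_or_eq.mp hi with hi | rfl
          · rw [if_pos (by omega), if_pos (by omega), ← hsz i hi]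
            rfl
          · rw [if_neg (by omega), if_pos le_rfl, hK.stable i le_rfl, hm, ← hγm]
            push_cast
            exact Finset.sum_congr rfl fun k _ => by ring
        · funext k
          rw [if_pos le_rfl, hK.stable r le_rfl]
          simp
      · intro K hK
        simp only [Finset.coe_filter, Finset.mem_filter, mem_stripChains, Set.mem_ofPred_eq] at hK
        funext i
        beta_reduce
        split_ifs with h
        · rw [min_eq_left h]
        · rw [hK.1.1.stable i (by omega)]
      · intro K hK
        simp only [Finset.coe_filter, mem_stripChains, Set.mem_ofPred_eq] at hK
        funext i
        simp only
        rw [if_pos (by omega)]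
        rcases le_or_gt i r with h | h
        · rw [min_eq_left h]
        · rw [min_eq_right h.le, hK.1.stable r le_rfl, hK.1.stable i h.le]

end StripChains

section Expansion

open Finset Equiv

/-- The alternating sum of indicators obtained from a Jacobi–Trudi determinant by extracting the
coefficient of a given weight. -/
noncomputable def weightDet (n : ℕ) (l w : ℕ → ℤ) : ℚ :=
  ∑ σ : Perm (Fin n), ((Perm.sign σ : ℤ) : ℚ) *
    ∏ j : Fin n, if w j = l (σ j) - ((σ j : ℕ) : ℤ) + ((j : ℕ) : ℤ) then (1 : ℚ) else 0

theorem weightDet_congr {n : ℕ} {l w w' : ℕ → ℤ} (h : ∀ j < n, w j = w' j) :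
    weightDet n l w = weightDet n l w' := by
  unfold weightDet
  refine Finset.sum_congr rfl fun σ _ => ?_
  congr 1
  exact Finset.prod_congr rfl fun j _ => by rw [h j j.2]

theorem weightDet_swap {n : ℕ} {l w w' : ℕ → ℤ} {i : ℕ} (hi : i + 1 < n)
    (h0 : w' i = w (i + 1) - 1) (h1 : w' (i + 1) = w i + 1)
    (h : ∀ j, j ≠ i → j ≠ i + 1 → w' j = w j) :
    weightDet n l w' = -weightDet n l w := by
  unfold weightDet
  let x : Fin n := ⟨i, by omega⟩
  let y : Fin n := ⟨i + 1, hi⟩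
  have hxy : x ≠ y := by simp [x, y, Fin.ext_iff]
  rw [← Finset.sum_neg_distrib]
  refine Fintype.sum_equiv (Equiv.mulRight (swap x y)) _ _ fun σ => ?_
  rw [Equiv.coe_mulRight, Perm.sign_mul, Perm.sign_swap hxy]
  have : ∏ j : Fin n, (if w' j = l (σ j) - ((σ j : ℕ) : ℤ) + ((j : ℕ) : ℤ) then (1 : ℚ) else 0)
      = ∏ j : Fin n, (if w j = l ((σ * swap x y) j) - (((σ * swap x y) j : ℕ) : ℤ) + ((j : ℕ) : ℤ)
          then (1 : ℚ) else 0) := by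
    refine Fintype.prod_equiv (swap x y) _ _ fun j => ?_
    simp only [Perm.mul_apply, swap_apply_self]
    rcases eq_or_ne j x with rfl | hjx
    · rw [swap_apply_left]
      simp only [x, y, h0]
      congr 1
      apply propext
      push_cast
      constructor <;> intro h <;> linarith
    · rcases eq_or_ne j y with rfl | hjy
      · rw [swap_apply_right]
        simp only [x, y, h1]
        congr 1
        apply propext
        push_cast
        constructor <;> intro h <;> linarith
      · rw [swap_apply_of_ne_of_ne hjx hjy, h j]
        · exact fun hj => hjx (Fin.ext hj)
        · exact fun hj => hjy (Fin.ext hj)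
  rw [this]
  push_cast
  ring

theorem hallBilin_hProd_mul_hProd_jtDet (N a b : ℕ) (β : Fin a → ℤ) (γ : Fin b → ℤ) {ν : ℕ → ℤ}
    (hν : Antitone ν) (hν0 : ∀ k, N ≤ k → ν k = 0) :
    hallBilin (hProd β * hProd γ) (jtDet N ν)
      = ∑ K ∈ stripChains N (a + b) ν,
          (∏ j : Fin a, if stripSize N K j = β j then (1 : ℚ) else 0) *
            ∏ j : Fin b, if stripSize N K (a + j) = γ j then (1 : ℚ) else 0 := by
  let α : ℕ → ℤ := fun i =>
    if h : i < a then β ⟨i, h⟩ else if h : i - a < b then γ ⟨i - a, h⟩ else 0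
  have hα1 : ∀ j : Fin a, α j = β j := fun j => by simp [α]
  have hα2 : ∀ j : Fin b, α (a + j) = γ j := fun j => by simp [α]
  have hprod : hProd β * hProd γ = ∏ i ∈ range (a + b), hInt (α i) := by
    rw [Finset.prod_range_add, Finset.prod_range, Finset.prod_range]
    simp only [hα1, hα2, hProd]
  rw [hprod, hallBilin_prod_hInt_jtDet N (a + b) α hν hν0, Finset.card_filter, Nat.cast_sum]
  refine Finset.sum_congr rfl fun K _ => ?_
  have : (∏ j : Fin a, if stripSize N K j = β j then (1 : ℚ) else 0) *
      (∏ j : Fin b, if stripSize N K (a + j) = γ j then (1 : ℚ) else 0)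
      = ∏ i ∈ range (a + b), if stripSize N K i = α i then (1 : ℚ) else 0 := by
    rw [Finset.prod_range_add, Finset.prod_range, Finset.prod_range]
    simp only [hα1, hα2]
  rw [this, Finset.prod_boole]
  simp only [mem_range]
  push_cast
  rfl

theorem hallBilin_jtDet_mul_jtDet (N a b : ℕ) (l m : ℕ → ℤ) {ν : ℕ → ℤ}
    (hν : Antitone ν) (hν0 : ∀ k, N ≤ k → ν k = 0) :
    hallBilin (jtDet a l * jtDet b m) (jtDet N ν)
      = ∑ K ∈ stripChains N (a + b) ν,
          weightDet a l (stripSize N K) * weightDet b m (fun j => stripSize N K (a + j)) := by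
  simp only [jtDet_eq_sum a, jtDet_eq_sum b, Finset.sum_mul_sum, map_sum, LinearMap.sum_apply,
    smul_mul_smul_comm, map_smul, LinearMap.smul_apply,
    hallBilin_hProd_mul_hProd_jtDet N a b _ _ hν hν0, weightDet, smul_eq_mul]
  symm
  rw [Finset.sum_comm]
  refine Finset.sum_congr rfl fun σ _ => ?_
  rw [Finset.sum_comm]
  refine Finset.sum_congr rfl fun τ _ => ?_
  rw [Finset.mul_sum]
  refine Finset.sum_congr rfl fun K _ => ?_
  ring

end Expansion

section Involution

open Finset

/-- Rows `i` and `i + 1` of the filling encoded by `K` fail to satisfy column strictness at the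
letter indexed by `k` exactly when this quantity is negative. -/
def rowGap (K : ℕ → ℕ → ℤ) (i k : ℕ) : ℤ :=
  ∑ k' ∈ range k, (K (i + 1) k' - K i k') - ∑ k' ∈ range (k + 1), (K (i + 2) k' - K (i + 1) k')

/-- The reflected middle row of three consecutive rows `α`, `κ`, `β`. -/
def flipRow (α κ β : ℕ → ℤ) (k : ℕ) (d : ℤ) (j : ℕ) : ℤ :=
  if j < k then κ j
  else if j = k then max (α k) (β (k + 1)) - 1 - d
  else min (α (j - 1)) (β j) + max (α j) (β (j + 1)) - κ j

/-- Reflect row `i + 1` of `K` starting at column `k`. -/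
def flipChain (K : ℕ → ℕ → ℤ) (i k : ℕ) : ℕ → ℕ → ℤ :=
  Function.update K (i + 1) (flipRow (K i) (K (i + 1)) (K (i + 2)) k (rowGap K i k))

theorem flipChain_of_ne {K : ℕ → ℕ → ℤ} {i k i' : ℕ} (h : i' ≠ i + 1) :
    flipChain K i k i' = K i' := Function.update_of_ne h _ _

theorem flipChain_self (K : ℕ → ℕ → ℤ) (i k : ℕ) :
    flipChain K i k (i + 1) = flipRow (K i) (K (i + 1)) (K (i + 2)) k (rowGap K i k) :=
  Function.update_self _ _ _

theorem flipChain_of_lt {K : ℕ → ℕ → ℤ} {i k i' k' : ℕ} (h : k' < k) :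
    flipChain K i k i' k' = K i' k' := by
  rcases eq_or_ne i' (i + 1) with rfl | hi
  · rw [flipChain_self, flipRow, if_pos h]
  · rw [flipChain_of_ne hi]

theorem flipRow_self (α κ β : ℕ → ℤ) (k : ℕ) (d : ℤ) :
    flipRow α κ β k d k = max (α k) (β (k + 1)) - 1 - d := by
  simp [flipRow]

theorem flipRow_of_gt {α κ β : ℕ → ℤ} {k j : ℕ} (d : ℤ) (h : k < j) :
    flipRow α κ β k d j = min (α (j - 1)) (β j) + max (α j) (β (j + 1)) - κ j := by
  rw [flipRow, if_neg (by omega), if_neg (by omega)]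

theorem rowGap_flipChain_of_lt {K : ℕ → ℕ → ℤ} {i k i' k' : ℕ} (h : k' < k) :
    rowGap (flipChain K i k) i' k' = rowGap K i' k' := by
  unfold rowGap
  congr 1 <;> refine Finset.sum_congr rfl fun j hj => ?_ <;> rw [Finset.mem_range] at hj <;>
    rw [flipChain_of_lt (by omega), flipChain_of_lt (by omega)]

theorem rowGap_flipChain_of_gt {K : ℕ → ℕ → ℤ} {i k i' : ℕ} (h : i < i') :
    rowGap (flipChain K i k) i' k = rowGap K i' k := by
  unfold rowGap
  congr 1
  · refine Finset.sum_congr rfl fun j hj => ?_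
    rw [Finset.mem_range] at hj
    rw [flipChain_of_lt hj, flipChain_of_lt hj]
  · refine Finset.sum_congr rfl fun j hj => ?_
    rw [flipChain_of_ne (by omega), flipChain_of_ne (by omega)]

theorem rowGap_flipChain_self (K : ℕ → ℕ → ℤ) (i k : ℕ) :
    rowGap (flipChain K i k) i k = max (K i k) (K (i + 2) (k + 1)) - 1 - K (i + 1) k := by
  have h : rowGap (flipChain K i k) i k
      = rowGap K i k - K (i + 1) k + flipChain K i k (i + 1) k := by
    unfold rowGap
    have h1 : ∑ k' ∈ range k, (flipChain K i k (i + 1) k' - flipChain K i k i k')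
        = ∑ k' ∈ range k, (K (i + 1) k' - K i k') :=
      Finset.sum_congr rfl fun j hj => by
        rw [Finset.mem_range] at hj
        rw [flipChain_of_lt hj, flipChain_of_lt hj]
    have h2 : ∑ k' ∈ range k, (flipChain K i k (i + 2) k' - flipChain K i k (i + 1) k')
        = ∑ k' ∈ range k, (K (i + 2) k' - K (i + 1) k') :=
      Finset.sum_congr rfl fun j hj => by
        rw [Finset.mem_range] at hj
        rw [flipChain_of_lt hj, flipChain_of_lt hj]
    rw [h1, Finset.sum_range_succ, h2, Finset.sum_range_succ, flipChain_of_ne (i' := i + 2) (by omega)]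
    ring
  rw [h, flipChain_self, flipRow_self]
  ring

theorem flipChain_flipChain (K : ℕ → ℕ → ℤ) (i k : ℕ) :
    flipChain (flipChain K i k) i k = K := by
  funext i' j
  rcases eq_or_ne i' (i + 1) with rfl | hi
  · rcases lt_trichotomy j k with hj | rfl | hj
    · rw [flipChain_of_lt hj, flipChain_of_lt hj]
    · rw [flipChain_self, flipRow_self, rowGap_flipChain_self, flipChain_of_ne (by omega),
        flipChain_of_ne (by omega)]
      ring
    · rw [flipChain_self, flipRow_of_gt _ hj, flipChain_of_ne (by omega),
        flipChain_of_ne (by omega), flipChain_self, flipRow_of_gt _ hj]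
      ring
  · rw [flipChain_of_ne hi, flipChain_of_ne hi]

theorem rowGap_succ (K : ℕ → ℕ → ℤ) (i k : ℕ) :
    rowGap K i (k + 1) = rowGap K i k + (K (i + 1) k - K i k)
      - (K (i + 2) (k + 1) - K (i + 1) (k + 1)) := by
  unfold rowGap
  rw [Finset.sum_range_succ _ k, Finset.sum_range_succ _ (k + 1)]
  ring

namespace IsStripChain

variable {N r : ℕ} {ν : ℕ → ℤ} {K : ℕ → ℕ → ℤ}

theorem flipRow_bounds (h : IsStripChain N r ν K) {i k : ℕ}
    (hk : ∀ k' < k, 0 ≤ rowGap K i k') (hneg : rowGap K i k < 0) (j : ℕ) :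
    (K i j ≤ flipChain K i k (i + 1) j ∧ flipChain K i k (i + 1) j ≤ K (i + 2) j) ∧
      (K (i + 2) (j + 1) ≤ flipChain K i k (i + 1) j ∧
        flipChain K i k (i + 1) (j + 1) ≤ K i j) := by
  have key : ∀ j, max (K i j) (K (i + 2) (j + 1)) ≤ flipChain K i k (i + 1) j ∧
      flipChain K i k (i + 1) j ≤ K (i + 2) j ∧
        (∀ j', j = j' + 1 → flipChain K i k (i + 1) j ≤ K i j') := by
    intro j
    have a1 := h.le_succ i j
    have a2 : K (i + 1) j ≤ K (i + 2) j := h.le_succ (i + 1) j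
    have a3 : K (i + 2) (j + 1) ≤ K (i + 1) j := h.strip (i + 1) j
    rcases lt_trichotomy j k with hj | rfl | hj
    · rw [flipChain_of_lt hj]
      refine ⟨max_le a1 a3, a2, fun j' hj' => ?_⟩
      subst hj'
      exact h.strip i j'
    · rw [flipChain_self, flipRow_self]
      have hM := max_le a1 a3
      refine ⟨by omega, ?_, ?_⟩
      · rcases j with _ | j
        · simp only [rowGap, Finset.range_zero, Finset.sum_empty, zero_add, Finset.sum_range_one]
            at hneg hM ⊢
          omega
        · have h0 := hk j (Nat.lt_succ_self j)
          have b1 := h.le_succ i j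
          rw [rowGap_succ]
          omega
      · rintro j rfl
        have h0 := hk j (Nat.lt_succ_self j)
        have b1 : K (i + 2) (j + 1) ≤ K (i + 1) j := h.strip (i + 1) j
        rw [rowGap_succ]
        omega
    · obtain ⟨j, rfl⟩ : ∃ j', j = j' + 1 := ⟨j - 1, by omega⟩
      rw [flipChain_self, flipRow_of_gt _ hj]
      have b1 := h.strip i j
      have hM := max_le a1 a3
      have hm := le_min b1 a2
      simp only [Nat.add_sub_cancel]
      refine ⟨by omega, by omega, fun j' hj' => ?_⟩
      obtain rfl : j = j' := by omega
      omega
  obtain ⟨c1, c2, -⟩ := key j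
  exact ⟨⟨(le_max_left _ _).trans c1, c2⟩, (le_max_right _ _).trans c1,
    (key (j + 1)).2.2 j rfl⟩

theorem reflect (h : IsStripChain N r ν K) {i k : ℕ} (hi : i + 1 < r)
    (hk : ∀ k' < k, 0 ≤ rowGap K i k') (hneg : rowGap K i k < 0) :
    IsStripChain N r ν (flipChain K i k) := by
  have hb := h.flipRow_bounds hk hneg
  refine ⟨fun j => ?_, fun i' j => ?_, fun i' j => ?_, fun i' hi' => ?_, h.support⟩
  · rw [flipChain_of_ne (by omega)]; exact h.zero j
  · rcases eq_or_ne i' i with rfl | h1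
    · rw [flipChain_of_ne (i' := i') (by omega)]
      exact (hb j).1.1
    · rcases eq_or_ne i' (i + 1) with rfl | h2
      · rw [flipChain_of_ne (i' := i + 1 + 1) (by omega)]
        exact (hb j).1.2
      · rw [flipChain_of_ne h2, flipChain_of_ne (by omega)]
        exact h.le_succ i' j
  · rcases eq_or_ne i' i with rfl | h1
    · rw [flipChain_of_ne (i' := i') (by omega)]
      exact (hb j).2.2
    · rcases eq_or_ne i' (i + 1) with rfl | h2
      · rw [flipChain_of_ne (i' := i + 1 + 1) (by omega)]
        exact (hb j).2.1
      · rw [flipChain_of_ne h2, flipChain_of_ne (by omega)]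
        exact h.strip i' j
  · rw [flipChain_of_ne (by omega)]; exact h.stable i' hi'

end IsStripChain

theorem sum_flipRow (K : ℕ → ℕ → ℤ) (i k n : ℕ) (hn : k ≤ n) :
    ∑ j ∈ range (n + 1), (K (i + 1) j + flipChain K i k (i + 1) j)
      = ∑ j ∈ range n, K i j + ∑ j ∈ range (n + 1), K (i + 2) j - 1
        + max (K i n) (K (i + 2) (n + 1)) := by
  induction n, hn using Nat.le_induction with
  | base =>
    have h1 : ∑ j ∈ range k, (K (i + 1) j + flipChain K i k (i + 1) j)
        = ∑ j ∈ range k, (K (i + 1) j + K (i + 1) j) :=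
      Finset.sum_congr rfl fun j hj => by rw [flipChain_of_lt (Finset.mem_range.mp hj)]
    rw [Finset.sum_range_succ, h1, flipChain_self, flipRow_self, rowGap]
    simp only [Finset.sum_range_succ, Finset.sum_add_distrib, Finset.sum_sub_distrib]
    ring
  | succ n hn ih =>
    rw [Finset.sum_range_succ, ih, flipChain_self, flipRow_of_gt _ (by omega)]
    simp only [Nat.add_sub_cancel]
    have := min_add_max (K i n) (K (i + 2) (n + 1))
    rw [Finset.sum_range_succ (K i) n, Finset.sum_range_succ (K (i + 2)) (n + 1)]
    linarith

section Weight

variable {N r : ℕ} {ν : ℕ → ℤ} {K : ℕ → ℕ → ℤ}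

theorem stripSize_flipChain_of_ne {i k i' : ℕ} (h0 : i' ≠ i) (h1 : i' ≠ i + 1) :
    stripSize N (flipChain K i k) i' = stripSize N K i' := by
  unfold stripSize
  rw [flipChain_of_ne h1, flipChain_of_ne (by omega)]

theorem IsStripChain.sum_flipRow_eq (h : IsStripChain N r ν K) {i k : ℕ} (hk : k < N) :
    ∑ j ∈ range N, K (i + 1) j + ∑ j ∈ range N, flipChain K i k (i + 1) j
      = ∑ j ∈ range N, K i j + ∑ j ∈ range N, K (i + 2) j - 1 := by
  obtain ⟨n, rfl⟩ : ∃ n, N = n + 1 := ⟨N - 1, by omega⟩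
  rw [← Finset.sum_add_distrib, sum_flipRow K i k n (by omega), h.eq_zero (i + 2) le_rfl,
    max_eq_left (h.nonneg i n), Finset.sum_range_succ _ n]
  simp only [Finset.sum_range_succ]
  ring

theorem IsStripChain.stripSize_flipChain (h : IsStripChain N r ν K) {i k : ℕ} (hk : k < N) :
    stripSize N (flipChain K i k) i = stripSize N K (i + 1) - 1 ∧
      stripSize N (flipChain K i k) (i + 1) = stripSize N K i + 1 := by
  have hs := h.sum_flipRow_eq (i := i) hk
  unfold stripSize
  rw [flipChain_of_ne (i' := i) (by omega), flipChain_of_ne (i' := i + 1 + 1) (by omega)]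
  simp only [Finset.sum_sub_distrib]
  constructor <;> linarith

end Weight

/-- The rows `i` and `i + 1` of a filling, lying in the same one of the two blocks `[0, a)`,
`[a, r)`, fail to be column strict at the letter indexed by `k`. -/
def IsViolation (N a r : ℕ) (K : ℕ → ℕ → ℤ) (i k : ℕ) : Prop :=
  i + 1 < r ∧ i + 1 ≠ a ∧ k < N ∧ rowGap K i k < 0

theorem weightDet_mul_weightDet_flipChain {N a b : ℕ} {ν : ℕ → ℤ} {K : ℕ → ℕ → ℤ} (l m : ℕ → ℤ)
    (h : IsStripChain N (a + b) ν K) {i k : ℕ} (hv : IsViolation N a (a + b) K i k) :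
    weightDet a l (stripSize N (flipChain K i k)) *
        weightDet b m (fun j => stripSize N (flipChain K i k) (a + j))
      = -(weightDet a l (stripSize N K) * weightDet b m (fun j => stripSize N K (a + j))) := by
  obtain ⟨hi, hia, hk, -⟩ := hv
  obtain ⟨h0, h1⟩ := h.stripSize_flipChain (i := i) hk
  rcases lt_or_ge (i + 1) a with hlt | hge
  · rw [weightDet_swap hlt h0 h1 fun j hj hj' => stripSize_flipChain_of_ne hj hj',
      weightDet_congr (w := fun j => stripSize N (flipChain K i k) (a + j))
        (w' := fun j => stripSize N K (a + j))
        fun j _ => stripSize_flipChain_of_ne (by omega) (by omega)]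
    ring
  · obtain ⟨c, rfl⟩ : ∃ c, i = a + c := ⟨i - a, by omega⟩
    rw [weightDet_congr (w := stripSize N (flipChain K (a + c) k)) (w' := stripSize N K)
        fun j _ => stripSize_flipChain_of_ne (by omega) (by omega),
      weightDet_swap (n := b) (i := c) (w := fun j => stripSize N K (a + j))
        (w' := fun j => stripSize N (flipChain K (a + c) k) (a + j)) (by omega) h0 h1
        fun j hj hj' => stripSize_flipChain_of_ne (by omega) (by omega)]
    ring

open Classical in
theorem sum_weightDet_violation (N a b : ℕ) (l m ν : ℕ → ℤ) :
    ∑ K ∈ (stripChains N (a + b) ν).filter (fun K => ∃ i k, IsViolation N a (a + b) K i k),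
      weightDet a l (stripSize N K) * weightDet b m (fun j => stripSize N K (a + j)) = 0 := by
  refine sum_eq_zero_of_indexed_involution (ι := ℕ ×ₗ ℕ) _ _
    (fun j K => (ofLex j).2 ≤ a + b ∧
      IsViolation N a (a + b) K (a + b - (ofLex j).2) (ofLex j).1)
    (fun j K => flipChain K (a + b - (ofLex j).2) (ofLex j).1) ?_ ?_
  · intro K hK
    obtain ⟨i, k, hv⟩ := (Finset.mem_filter.mp hK).2
    refine ⟨toLex (k, a + b - i), ?_⟩
    have hi : a + b - (a + b - i) = i := by have := hv.1; omega
    simpa [hi] using hv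
  · intro j K hK hv hmin
    obtain ⟨hj, hv⟩ := hv
    have hK := mem_stripChains.mp (Finset.mem_filter.mp hK).1
    obtain ⟨k, c⟩ := j
    change IsViolation N a (a + b) K (a + b - c) k at hv
    change c ≤ a + b at hj
    change flipChain K (a + b - c) k ∈ _ ∧ (c ≤ a + b ∧ IsViolation N a (a + b)
      (flipChain K (a + b - c) k) (a + b - c) k) ∧ _ ∧
      flipChain (flipChain K (a + b - c) k) (a + b - c) k = K ∧ _
    obtain ⟨hi, hia, hk, hneg⟩ := id hv
    set i := a + b - c with hidef
    have hlow : ∀ k' < k, 0 ≤ rowGap K i k' := by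
      intro k' hk'
      by_contra hlt
      refine hmin (toLex (k', c)) (Prod.Lex.toLex_lt_toLex.mpr (Or.inl hk')) ⟨hj, hi, hia, ?_, ?_⟩
      · exact hk'.trans hk
      · exact not_le.mp hlt
    have hK' := hK.reflect hi hlow hneg
    have hv' : IsViolation N a (a + b) (flipChain K i k) i k := by
      refine ⟨hi, hia, hk, ?_⟩
      rw [rowGap_flipChain_self]
      have h1 : K (i + 2) (k + 1) ≤ K (i + 1) k := hK.strip (i + 1) k
      have := max_le (hK.le_succ i k) h1
      omega
    refine ⟨Finset.mem_filter.mpr ⟨mem_stripChains.mpr hK', i, k, hv'⟩, ⟨hj, hv'⟩, ?_,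
      flipChain_flipChain K i k, weightDet_mul_weightDet_flipChain l m hK hv⟩
    intro j' hj' hviol
    refine hmin j' hj' ⟨hviol.1, hviol.2.1, hviol.2.2.1, hviol.2.2.2.1, ?_⟩
    have hviol' := hviol.2.2.2.2
    obtain ⟨k', c'⟩ := j'
    change rowGap (flipChain K i k) (a + b - c') k' < 0 at hviol'
    change rowGap K (a + b - c') k' < 0
    rcases Prod.Lex.toLex_lt_toLex.mp hj' with hlt | ⟨heq, hlt⟩
    · rwa [rowGap_flipChain_of_lt hlt] at hviol'
    · have hc' : c' < c := hlt
      have heq : k' = k := heq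
      subst heq
      rwa [rowGap_flipChain_of_gt (by omega)] at hviol'

end Involution

section GoodChains

open Finset

open Classical in
/-- The chains encoding pairs of column strict tableaux with row lengths `l` and `m`. -/
noncomputable def goodChains (N a b : ℕ) (l m ν : ℕ → ℤ) : Finset (ℕ → ℕ → ℤ) :=
  (stripChains N (a + b) ν).filter fun K =>
    (∀ i k, ¬ IsViolation N a (a + b) K i k) ∧
      (∀ i < a, stripSize N K i = l i) ∧ ∀ j < b, stripSize N K (a + j) = m j

theorem mem_goodChains {N a b : ℕ} {l m ν : ℕ → ℤ} {K : ℕ → ℕ → ℤ} :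
    K ∈ goodChains N a b l m ν ↔ IsStripChain N (a + b) ν K ∧
      (∀ i k, ¬ IsViolation N a (a + b) K i k) ∧
        (∀ i < a, stripSize N K i = l i) ∧ ∀ j < b, stripSize N K (a + j) = m j := by
  simp [goodChains, mem_stripChains]

theorem IsStripChain.stripSize_succ_le {N a r : ℕ} {ν : ℕ → ℤ} {K : ℕ → ℕ → ℤ}
    (h : IsStripChain N r ν K) (hv : ∀ i k, ¬ IsViolation N a r K i k) {i : ℕ}
    (hi : i + 1 < r) (hia : i + 1 ≠ a) : stripSize N K (i + 1) ≤ stripSize N K i := by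
  rcases N with _ | n
  · simp [stripSize]
  · have h1 : 0 ≤ rowGap K i n := by
      by_contra hlt
      exact hv i n ⟨hi, hia, Nat.lt_succ_self n, not_le.mp hlt⟩
    have h2 := h.le_succ i n
    rw [rowGap] at h1
    rw [stripSize, stripSize, Finset.sum_range_succ _ n] at *
    rw [Finset.sum_range_succ (fun k => K (i + 1) k - K i k) n]
    linarith

theorem antitone_of_succ_le_of_lt {n : ℕ} {w : ℕ → ℤ} (h : ∀ i, i + 1 < n → w (i + 1) ≤ w i)
    (i j : ℕ) (hij : i ≤ j) (hj : j < n) : w j ≤ w i := by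
  induction j, hij using Nat.le_induction with
  | base => exact le_rfl
  | succ j _ ih => exact (h j hj).trans (ih (by omega))

theorem hallBilin_jtDet_mul_jtDet_eq_card (N a b : ℕ) {l m ν : ℕ → ℤ}
    (hl : Antitone l) (hm : Antitone m) (hν : Antitone ν) (hν0 : ∀ k, N ≤ k → ν k = 0) :
    hallBilin (jtDet a l * jtDet b m) (jtDet N ν) = (goodChains N a b l m ν).card := by
  classical
  rw [hallBilin_jtDet_mul_jtDet N a b l m hν hν0,
    ← Finset.sum_filter_add_sum_filter_not (stripChains N (a + b) ν)
      (fun K => ∃ i k, IsViolation N a (a + b) K i k),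
    sum_weightDet_violation, zero_add]
  have hterm : ∀ K ∈ (stripChains N (a + b) ν).filter
      (fun K => ¬ ∃ i k, IsViolation N a (a + b) K i k),
      weightDet a l (stripSize N K) * weightDet b m (fun j => stripSize N K (a + j))
        = if (∀ i < a, stripSize N K i = l i) ∧ ∀ j < b, stripSize N K (a + j) = m j
          then 1 else 0 := by
    intro K hK
    obtain ⟨hK, hv⟩ := Finset.mem_filter.mp hK
    have hK := mem_stripChains.mp hK
    have hv : ∀ i k, ¬ IsViolation N a (a + b) K i k := fun i k h => hv ⟨i, k, h⟩
    rw [weightDet, det_ite_sub_eq (n := a)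
        (antitone_of_succ_le_of_lt fun i hi => hK.stripSize_succ_le hv (by omega) (by omega))
        fun i j hij _ => hl hij,
      weightDet, det_ite_sub_eq (n := b) (w := fun j => stripSize N K (a + j))
        (antitone_of_succ_le_of_lt fun i hi =>
          hK.stripSize_succ_le hv (i := a + i) (by omega) (by omega))
        fun i j hij _ => hm hij, ite_and]
    split_ifs <;> simp
  rw [Finset.sum_congr rfl hterm, Finset.sum_boole, Finset.filter_filter, goodChains]
  push Not
  rfl

end GoodChains

section Rows

theorem exists_append_of_pairwise_le {r : List ℕ} (hr : r.Pairwise (· ≤ ·)) (t : ℕ) :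
    ∃ u v, r = u ++ v ∧ (∀ x ∈ u, x ≤ t) ∧ ∀ x ∈ v, t < x := by
  induction r with
  | nil => exact ⟨[], [], by simp⟩
  | cons x r ih =>
    obtain ⟨hx, hr⟩ := List.pairwise_cons.mp hr
    rcases le_or_gt x t with hxt | hxt
    · obtain ⟨u, v, rfl, hu, hv⟩ := ih hr
      exact ⟨x :: u, v, rfl, by simpa [hxt] using hu, hv⟩
    · refine ⟨[], x :: r, rfl, by simp, fun y hy => ?_⟩
      rcases List.mem_cons.mp hy with rfl | hy
      · exact hxt
      · exact hxt.trans_le (hx y hy)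

theorem lt_countP_le_iff {r : List ℕ} (hr : r.Pairwise (· ≤ ·)) (t j : ℕ) :
    j < r.countP (· ≤ t) ↔ j < r.length ∧ r.getD j 0 ≤ t := by
  obtain ⟨u, v, rfl, hu, hv⟩ := exists_append_of_pairwise_le hr t
  have hcu : u.countP (· ≤ t) = u.length := by simpa [List.countP_eq_length] using hu
  have hcv : v.countP (· ≤ t) = 0 := by simpa [List.countP_eq_zero] using hv
  rw [List.countP_append, hcu, hcv, Nat.add_zero]
  constructor
  · intro h
    refine ⟨by simp; omega, ?_⟩
    rw [List.getD_append _ _ _ _ h, List.getD_eq_getElem _ _ h]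
    exact hu _ (List.getElem_mem h)
  · rintro ⟨h1, h2⟩
    by_contra h
    rw [not_lt] at h
    rw [List.length_append] at h1
    rw [List.getD_append_right _ _ _ _ h, List.getD_eq_getElem _ _ (by omega)] at h2
    exact absurd (hv _ (List.getElem_mem (by omega))) (not_lt.mpr h2)

theorem column_strict_iff {u v : List ℕ} (hu : u.Pairwise (· ≤ ·)) (hv : v.Pairwise (· ≤ ·))
    (hv0 : ∀ x ∈ v, 0 < x) (hlen : v.length ≤ u.length) :
    (∀ j < v.length, u.getD j 0 < v.getD j 0) ↔
      ∀ k, v.countP (· ≤ k + 1) ≤ u.countP (· ≤ k) := by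
  constructor
  · intro h k
    by_contra hlt
    rw [not_le] at hlt
    obtain ⟨h1, h2⟩ := (lt_countP_le_iff hv _ _).mp hlt
    have h3 := h _ h1
    exact lt_irrefl _ ((lt_countP_le_iff hu k _).mpr ⟨h1.trans_le hlen, by omega⟩)
  · intro h j hj
    have hpos : 0 < v.getD j 0 := by
      rw [List.getD_eq_getElem _ _ hj]; exact hv0 _ (List.getElem_mem hj)
    obtain ⟨k, hk⟩ : ∃ k, v.getD j 0 = k + 1 := ⟨v.getD j 0 - 1, by omega⟩
    have := ((lt_countP_le_iff hu k j).mp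
      (((lt_countP_le_iff hv (k + 1) j).mpr ⟨hj, hk.le⟩).trans_le (h k))).2
    omega

theorem countP_le_succ (r : List ℕ) (n : ℕ) :
    r.countP (· ≤ n + 1) = r.countP (· ≤ n) + r.count (n + 1) := by
  induction r with
  | nil => rfl
  | cons x r ih =>
    simp only [List.countP_cons, List.count_cons, ih, beq_iff_eq, decide_eq_true_eq]
    split_ifs <;> omega

theorem sum_count_succ {r : List ℕ} (hr : ∀ x ∈ r, 0 < x) (n : ℕ) :
    ∑ k ∈ Finset.range n, r.count (k + 1) = r.countP (· ≤ n) := by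
  induction n with
  | zero =>
    symm
    rw [Finset.range_zero, Finset.sum_empty, List.countP_eq_zero]
    intro x hx
    have := hr x hx
    simp; omega
  | succ n ih => rw [Finset.sum_range_succ, ih, countP_le_succ]

/-- The weakly increasing row containing `c k` copies of the letter `k + 1`, for `k < N`. -/
def rowOfCounts (N : ℕ) (c : ℕ → ℕ) : List ℕ :=
  (List.range N).flatMap fun k => List.replicate (c k) (k + 1)

theorem rowOfCounts_succ (N : ℕ) (c : ℕ → ℕ) :
    rowOfCounts (N + 1) c = rowOfCounts N c ++ List.replicate (c N) (N + 1) := by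
  simp [rowOfCounts, List.range_succ]

theorem mem_rowOfCounts {N : ℕ} {c : ℕ → ℕ} {x : ℕ} (hx : x ∈ rowOfCounts N c) :
    0 < x ∧ x ≤ N := by
  simp only [rowOfCounts, List.mem_flatMap, List.mem_range, List.mem_replicate] at hx
  omega

theorem pairwise_rowOfCounts (N : ℕ) (c : ℕ → ℕ) : (rowOfCounts N c).Pairwise (· ≤ ·) := by
  induction N with
  | zero => simp [rowOfCounts]
  | succ N ih =>
    rw [rowOfCounts_succ, List.pairwise_append]
    refine ⟨ih, List.pairwise_replicate.mpr (Or.inr le_rfl), fun x hx y hy => ?_⟩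
    have := (mem_rowOfCounts hx).2
    have := (List.mem_replicate.mp hy).2
    omega

theorem count_rowOfCounts (N : ℕ) (c : ℕ → ℕ) (k : ℕ) :
    (rowOfCounts N c).count (k + 1) = if k < N then c k else 0 := by
  induction N with
  | zero => simp [rowOfCounts]
  | succ N ih =>
    rw [rowOfCounts_succ, List.count_append, ih, List.count_replicate]
    simp only [beq_iff_eq]
    rcases lt_trichotomy k N with h | rfl | h
    · rw [if_pos h, if_neg (by omega), if_pos (by omega)]; rfl
    · simp
    · rw [if_neg (by omega), if_neg (by omega), if_neg (by omega)]

/-- The number of letters `k + 1` in the first `i` rows. -/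
def rowChain (R : List (List ℕ)) (i k : ℕ) : ℤ := ((R.take i).flatten.count (k + 1) : ℤ)

theorem count_flatten_take_succ (R : List (List ℕ)) (i x : ℕ) :
    (R.take (i + 1)).flatten.count x = (R.take i).flatten.count x + (R.getD i []).count x := by
  rw [List.take_add_one, List.flatten_append, List.count_append]
  congr 1
  rw [List.getD_eq_getElem?_getD]
  cases R[i]? <;> simp

theorem rowChain_succ (R : List (List ℕ)) (i k : ℕ) :
    rowChain R (i + 1) k = rowChain R i k + ((R.getD i []).count (k + 1) : ℤ) := by
  rw [rowChain, rowChain, count_flatten_take_succ, Nat.cast_add]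

theorem count_flatten_map_reverse (R : List (List ℕ)) (x : ℕ) :
    (R.map List.reverse).flatten.count x = R.flatten.count x := by
  induction R with
  | nil => rfl
  | cons r R ih => simp [List.count_append, ih]

theorem exists_take_flatten_eq (R : List (List ℕ)) (p : ℕ) :
    ∃ i q, R.flatten.take p = (R.take i).flatten ++ (R.getD i []).take q := by
  induction R generalizing p with
  | nil => exact ⟨0, 0, by simp⟩
  | cons r R ih =>
    rcases le_or_gt p r.length with hp | hp
    · refine ⟨0, p, ?_⟩
      simp [List.take_append, Nat.sub_eq_zero_of_le hp]
    · obtain ⟨i, q, h⟩ := ih (p - r.length)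
      refine ⟨i + 1, q, ?_⟩
      rw [List.flatten_cons, List.take_append, h, List.take_of_length_le hp.le]
      simp

theorem isLatticeWord_reverse_iff {R : List (List ℕ)} (hR : ∀ r ∈ R, r.Pairwise (· ≤ ·)) :
    IsLatticeWord (R.map List.reverse).flatten ↔
      ∀ i k, rowChain R (i + 1) (k + 1) ≤ rowChain R i k := by
  constructor
  · intro h i k
    rcases lt_or_ge i R.length with hi | hi
    · obtain ⟨u, v, huv, hu, hv⟩ := exists_append_of_pairwise_le (hR _ (List.getElem_mem hi)) (k + 1)
      have hpre : ((R.take i).map List.reverse).flatten ++ v.reverse <+: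
          (R.map List.reverse).flatten := by
        refine ⟨u.reverse ++ ((R.drop (i + 1)).map List.reverse).flatten, ?_⟩
        conv_rhs => rw [← List.take_append_drop i R, List.drop_eq_getElem_cons hi, huv]
        simp
      have hle := h (((R.take i).map List.reverse).flatten ++ v.reverse).length (k + 1) (by omega)
      rw [← List.prefix_iff_eq_take.mp hpre] at hle
      simp only [List.count_append, count_flatten_map_reverse, List.count_reverse] at hle
      have h1 : v.count (k + 1) = 0 :=
        List.count_eq_zero.mpr fun hx => lt_irrefl _ (hv _ hx)
      have h2 : u.count (k + 1 + 1) = 0 :=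
        List.count_eq_zero.mpr fun hx => by have := hu _ hx; omega
      rw [rowChain_succ, List.getD_eq_getElem _ _ hi, huv, List.count_append, h2, rowChain, rowChain]
      omega
    · have hle := h (R.map List.reverse).flatten.length (k + 1) (by omega)
      rw [List.take_length, count_flatten_map_reverse, count_flatten_map_reverse] at hle
      rw [rowChain, rowChain, List.take_of_length_le hi, List.take_of_length_le (by omega)]
      exact_mod_cast hle
  · intro h p x hx
    obtain ⟨k, rfl⟩ : ∃ k, x = k + 1 := ⟨x - 1, by omega⟩
    obtain ⟨i, q, hiq⟩ := exists_take_flatten_eq (R.map List.reverse) p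
    have hrow : (R.map List.reverse).getD i [] = (R.getD i []).reverse := by
      simp only [List.getD_eq_getElem?_getD, List.getElem?_map]
      cases R[i]? <;> simp
    rw [hiq, hrow, ← List.map_take]
    simp only [List.count_append, count_flatten_map_reverse]
    have h1 : ((R.getD i []).reverse.take q).count (k + 1 + 1) ≤ (R.getD i []).count (k + 1 + 1) := by
      rw [← List.count_reverse (l := R.getD i [])]
      exact (List.take_sublist _ _).count_le _
    have h2 := h i k
    rw [rowChain_succ, rowChain, rowChain] at h2
    omega

end Rows

section Fillings

open Finset

/-- The rows of two column strict tableaux stacked on one another, the first one having `a` rows,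
whose reading word is a lattice word of content `ν`. -/
structure IsFilling (a : ℕ) (lens ν : List ℕ) (R : List (List ℕ)) : Prop where
  lens_eq : R.map List.length = lens
  sorted : ∀ r ∈ R, r.Pairwise (· ≤ ·)
  pos : ∀ r ∈ R, ∀ x ∈ r, 0 < x
  strict : ∀ i, i + 1 ≠ a → ∀ j < (R.getD (i + 1) []).length,
    (R.getD i []).getD j 0 < (R.getD (i + 1) []).getD j 0
  lattice : IsLatticeWord (R.map List.reverse).flatten
  content : HasContent (R.map List.reverse).flatten ν

theorem forall_getD_of_forall_mem {R : List (List ℕ)} {P : List ℕ → Prop} (h : ∀ r ∈ R, P r)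
    (h0 : P []) (i : ℕ) : P (R.getD i []) := by
  rcases lt_or_ge i R.length with hi | hi
  · rw [List.getD_eq_getElem _ _ hi]; exact h _ (List.getElem_mem hi)
  · rwa [List.getD_eq_default _ _ hi]

theorem rowGap_rowChain {R : List (List ℕ)} (hR : ∀ r ∈ R, ∀ x ∈ r, 0 < x) (i k : ℕ) :
    rowGap (rowChain R) i k
      = ((R.getD i []).countP (· ≤ k) : ℤ) - ((R.getD (i + 1) []).countP (· ≤ k + 1) : ℤ) := by
  have hpos := forall_getD_of_forall_mem (P := fun r => ∀ x ∈ r, 0 < x) hR (by simp)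
  rw [rowGap, ← sum_count_succ (hpos i), ← sum_count_succ (hpos (i + 1))]
  push_cast
  congr 1 <;> refine Finset.sum_congr rfl fun k' _ => ?_
  · rw [rowChain_succ]; ring
  · rw [rowChain_succ R (i + 1)]; ring

theorem stripSize_rowChain {R : List (List ℕ)} {N : ℕ} (hR : ∀ r ∈ R, ∀ x ∈ r, 0 < x ∧ x ≤ N)
    (i : ℕ) : stripSize N (rowChain R) i = (R.getD i []).length := by
  have hr := forall_getD_of_forall_mem (P := fun r => ∀ x ∈ r, 0 < x ∧ x ≤ N) hR (by simp) i
  have h1 : (R.getD i []).countP (· ≤ N) = (R.getD i []).length :=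
    List.countP_eq_length.mpr fun x hx => by simpa using (hr x hx).2
  rw [← h1, ← sum_count_succ fun x hx => (hr x hx).1, stripSize]
  push_cast
  exact Finset.sum_congr rfl fun k _ => by rw [rowChain_succ]; ring

theorem getD_map_length (R : List (List ℕ)) (i : ℕ) :
    (R.map List.length).getD i 0 = (R.getD i []).length := by
  simp only [List.getD_eq_getElem?_getD, List.getElem?_map]
  cases R[i]? <;> simp

theorem rowChain_of_length_le {R : List (List ℕ)} {i : ℕ} (hi : R.length ≤ i) (k : ℕ) :
    rowChain R i k = ((R.map List.reverse).flatten.count (k + 1) : ℤ) := by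
  rw [rowChain, List.take_of_length_le hi, count_flatten_map_reverse]

theorem IsFilling.le_length {a : ℕ} {lens ν : List ℕ} {R : List (List ℕ)}
    (h : IsFilling a lens ν R) : ∀ r ∈ R, ∀ x ∈ r, 0 < x ∧ x ≤ ν.length := by
  intro r hr x hx
  have hx0 := h.pos r hr x hx
  refine ⟨hx0, ?_⟩
  obtain ⟨k, rfl⟩ : ∃ k, x = k + 1 := ⟨x - 1, by omega⟩
  by_contra hlt
  have h1 := h.content k
  rw [List.getD_eq_default _ _ (by omega), count_flatten_map_reverse, List.count_eq_zero] at h1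
  exact h1 (List.mem_flatten.mpr ⟨r, hr, hx⟩)

theorem IsFilling.isStripChain {a r : ℕ} {lens ν : List ℕ} {R : List (List ℕ)}
    (h : IsFilling a lens ν R) (hr : lens.length = r) :
    IsStripChain ν.length r (fun k => (ν.getD k 0 : ℤ)) (rowChain R) := by
  have hlen : R.length = r := by rw [← hr, ← h.lens_eq, List.length_map]
  refine ⟨fun k => by simp [rowChain], fun i k => ?_,
    (isLatticeWord_reverse_iff h.sorted).mp h.lattice, fun i hi => ?_, fun k hk => ?_⟩
  · rw [rowChain_succ]; omega
  · funext k
    rw [rowChain_of_length_le (hlen.trans_le hi), h.content k]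
  · rw [List.getD_eq_default _ _ hk]; rfl

theorem IsFilling.mem_goodChains {L M ν : List ℕ} {R : List (List ℕ)}
    (hL : ∀ i, i + 1 < L.length → L.getD (i + 1) 0 ≤ L.getD i 0)
    (hM : ∀ i, i + 1 < M.length → M.getD (i + 1) 0 ≤ M.getD i 0)
    (h : IsFilling L.length (L ++ M) ν R) :
    rowChain R ∈ goodChains ν.length L.length M.length (fun i => (L.getD i 0 : ℤ))
      (fun i => (M.getD i 0 : ℤ)) (fun k => (ν.getD k 0 : ℤ)) := by
  have hlen : ∀ i, (R.getD i []).length = (L ++ M).getD i 0 := fun i => by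
    rw [← h.lens_eq, getD_map_length]
  rw [_root_.mem_goodChains]
  refine ⟨h.isStripChain List.length_append, ?_, fun i hi => ?_, fun j hj => ?_⟩
  · rintro i k ⟨hi, hia, -, hneg⟩
    rw [rowGap_rowChain h.pos] at hneg
    have hle : (R.getD (i + 1) []).length ≤ (R.getD i []).length := by
      rw [hlen, hlen]
      rcases lt_or_ge (i + 1) L.length with hlt | hge
      · rw [List.getD_append _ _ _ _ hlt, List.getD_append _ _ _ _ (by omega)]
        exact hL i hlt
      · rw [List.getD_append_right _ _ _ _ hge, List.getD_append_right _ _ _ _ (by omega),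
          show i + 1 - L.length = (i - L.length) + 1 by omega]
        exact hM _ (by omega)
    have hs := forall_getD_of_forall_mem h.sorted List.Pairwise.nil
    have := (column_strict_iff (hs i) (hs (i + 1))
      (forall_getD_of_forall_mem h.pos (by simp) (i + 1)) hle).mp (h.strict i hia) k
    omega
  · rw [stripSize_rowChain h.le_length, hlen, List.getD_append _ _ _ _ hi]
  · rw [stripSize_rowChain h.le_length, hlen, List.getD_append_right _ _ _ _ (by omega),
      Nat.add_sub_cancel_left]

/-- The rows encoded by a chain of partitions. -/
def rowsOfChain (N r : ℕ) (K : ℕ → ℕ → ℤ) : List (List ℕ) :=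
  (List.range r).map fun i => rowOfCounts N fun k => (K (i + 1) k - K i k).toNat

theorem rowsOfChain_getD {N r i : ℕ} (K : ℕ → ℕ → ℤ) (hi : i < r) :
    (rowsOfChain N r K).getD i [] = rowOfCounts N fun k => (K (i + 1) k - K i k).toNat := by
  simp [rowsOfChain, List.getD_eq_getElem?_getD, hi]

theorem rowChain_rowsOfChain {N r : ℕ} {ν : ℕ → ℤ} {K : ℕ → ℕ → ℤ} (h : IsStripChain N r ν K) :
    rowChain (rowsOfChain N r K) = K := by
  funext i k
  induction i with
  | zero => simp [rowChain, h.zero]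
  | succ i ih =>
    rw [rowChain_succ, ih]
    rcases lt_or_ge i r with hi | hi
    · rw [rowsOfChain_getD K hi, count_rowOfCounts]
      have := h.le_succ i k
      split_ifs with hk
      · omega
      · rw [h.eq_zero _ (not_lt.mp hk), h.eq_zero _ (not_lt.mp hk)]; rfl
    · rw [List.getD_eq_default _ _ (by simpa [rowsOfChain] using hi), h.stable i hi,
        h.stable (i + 1) (by omega)]
      simp

theorem mem_rowsOfChain {N r : ℕ} {K : ℕ → ℕ → ℤ} {u : List ℕ} (hu : u ∈ rowsOfChain N r K) :
    u.Pairwise (· ≤ ·) ∧ ∀ x ∈ u, 0 < x ∧ x ≤ N := by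
  obtain ⟨i, -, rfl⟩ := List.mem_map.mp hu
  exact ⟨pairwise_rowOfCounts _ _, fun x hx => mem_rowOfCounts hx⟩

theorem isFilling_rowsOfChain {L M ν : List ℕ} {K : ℕ → ℕ → ℤ}
    (hK : K ∈ goodChains ν.length L.length M.length (fun i => (L.getD i 0 : ℤ))
      (fun i => (M.getD i 0 : ℤ)) (fun k => (ν.getD k 0 : ℤ))) :
    IsFilling L.length (L ++ M) ν (rowsOfChain ν.length (L.length + M.length) K) := by
  obtain ⟨hK, hv, hl, hm⟩ := mem_goodChains.mp hK
  set R := rowsOfChain ν.length (L.length + M.length) K with hRdef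
  have hRK : rowChain R = K := rowChain_rowsOfChain hK
  have hRlen : R.length = L.length + M.length := by simp [hRdef, rowsOfChain]
  have hsort : ∀ r ∈ R, r.Pairwise (· ≤ ·) := fun r hr => (mem_rowsOfChain hr).1
  have hbd : ∀ r ∈ R, ∀ x ∈ r, 0 < x ∧ x ≤ ν.length := fun r hr => (mem_rowsOfChain hr).2
  have hpos : ∀ r ∈ R, ∀ x ∈ r, 0 < x := fun r hr x hx => (hbd r hr x hx).1
  have hsize : ∀ i, ((R.getD i []).length : ℤ) = stripSize ν.length K i := fun i => by
    rw [← stripSize_rowChain hbd, hRK]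
  have hlens : ∀ i < L.length + M.length, (R.getD i []).length = (L ++ M).getD i 0 := by
    intro i hi
    zify
    rw [hsize]
    rcases lt_or_ge i L.length with hlt | hge
    · rw [hl i hlt, List.getD_append _ _ _ _ hlt]
    · have := hm (i - L.length) (by omega)
      rw [Nat.add_sub_cancel' hge] at this
      rw [this, List.getD_append_right _ _ _ _ hge]
  refine ⟨?_, hsort, hpos, fun i hia j hj => ?_, ?_, fun k => ?_⟩
  · refine List.ext_getElem (by simp [hRlen]) fun i h1 h2 => ?_
    have := hlens i (by simpa using h2)
    rw [← getD_map_length, List.getD_eq_getElem _ _ h1, List.getD_eq_getElem _ _ h2] at this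
    exact this
  · have hi : i + 1 < L.length + M.length := by
      by_contra hge
      rw [List.getD_eq_default _ _ (by omega)] at hj
      simp at hj
    have hs := forall_getD_of_forall_mem hsort List.Pairwise.nil
    have hp := forall_getD_of_forall_mem hbd (by simp)
    have hle : (R.getD (i + 1) []).length ≤ (R.getD i []).length := by
      have := hK.stripSize_succ_le hv hi hia
      rw [← hsize, ← hsize] at this
      exact_mod_cast this
    refine (column_strict_iff (hs i) (hs (i + 1)) (fun x hx => (hp (i + 1) x hx).1) hle).mpr
      (fun k => ?_) j hj
    have hgap : ∀ k < ν.length,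
        (R.getD (i + 1) []).countP (· ≤ k + 1) ≤ (R.getD i []).countP (· ≤ k) := by
      intro k hk
      by_contra hlt
      refine hv i k ⟨hi, hia, hk, ?_⟩
      rw [← hRK, rowGap_rowChain hpos]
      omega
    rcases lt_or_ge k ν.length with hk | hk
    · exact hgap k hk
    · have h1 : (R.getD i []).countP (· ≤ k) = (R.getD i []).length :=
        List.countP_eq_length.mpr fun x hx => by simpa using (hp i x hx).2.trans hk
      rw [h1]
      exact List.countP_le_length.trans hle
  · rw [isLatticeWord_reverse_iff hsort, hRK]
    exact hK.strip
  · have := rowChain_of_length_le hRlen.le k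
    rw [hRK, hK.stable _ le_rfl] at this
    beta_reduce at this
    exact_mod_cast this.symm

theorem eq_of_rowChain_eq {R R' : List (List ℕ)} (hlen : R.length = R'.length)
    (hs : ∀ r ∈ R, r.Pairwise (· ≤ ·)) (hs' : ∀ r ∈ R', r.Pairwise (· ≤ ·))
    (hp : ∀ r ∈ R, ∀ x ∈ r, 0 < x) (hp' : ∀ r ∈ R', ∀ x ∈ r, 0 < x)
    (h : rowChain R = rowChain R') : R = R' := by
  refine List.ext_getElem hlen fun i h1 h2 => ?_
  have e1 := hs _ (List.getElem_mem h1)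
  have e2 := hs' _ (List.getElem_mem h2)
  refine List.Perm.eq_of_pairwise (le := (· ≤ ·)) (fun a b _ _ => le_antisymm) e1 e2 ?_
  refine List.perm_iff_count.mpr fun x => ?_
  rcases x with _ | k
  · rw [List.count_eq_zero.mpr fun h0 => lt_irrefl _ (hp _ (List.getElem_mem h1) _ h0),
      List.count_eq_zero.mpr fun h0 => lt_irrefl _ (hp' _ (List.getElem_mem h2) _ h0)]
  · have f1 := rowChain_succ R i k
    have f2 := rowChain_succ R' i k
    rw [h, f2, List.getD_eq_getElem _ _ h1, List.getD_eq_getElem _ _ h2] at f1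
    omega

end Fillings

section Tableaux

namespace SkewTab

theorem isCST_and_shape_iff {T : SkewTab} {l : List ℕ} (hl : ∀ i, l.getD (i + 1) 0 ≤ l.getD i 0)
    (hpos : ∀ x ∈ l, 0 < x) :
    T.IsCST ∧ T.shape = l ↔
      T.inn = List.replicate T.rows.length 0 ∧ T.rows.map List.length = l ∧
        (∀ r ∈ T.rows, r.Pairwise (· ≤ ·)) ∧ (∀ r ∈ T.rows, ∀ x ∈ r, 0 < x) ∧
          ∀ i, ∀ j < (T.rows.getD (i + 1) []).length,
            (T.rows.getD i []).getD j 0 < (T.rows.getD (i + 1) []).getD j 0 := by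
  have hinn : T.inn = List.replicate T.rows.length 0 → ∀ i, T.innFn i = 0 := by
    intro h i
    rw [innFn, h]
    rcases lt_or_ge i T.rows.length with hi | hi
    · simp [List.getD_eq_getElem?_getD, hi]
    · exact List.getD_eq_default _ _ (by simpa using hi)
  constructor
  · rintro ⟨⟨⟨-, -, -, -, hs, hp, hc⟩, hin⟩, hsh⟩
    refine ⟨hin, hsh, fun r hr => List.isChain_iff_pairwise.mp (hs r hr), hp, fun i j hj => ?_⟩
    have h0 := hinn hin
    have := hc i j (by simp [h0]) (by simpa [outFn, h0] using hj) (by simp [h0])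
    simpa [entry, h0] using this
  · rintro ⟨hin, hsh, hs, hp, hc⟩
    have h0 := hinn hin
    have hout : ∀ i, T.outFn i = l.getD i 0 := fun i => by
      rw [outFn, h0, ← hsh, getD_map_length, zero_add]
    refine ⟨⟨⟨by simp [hin], fun i => by simp [h0], fun i => by rw [hout, hout]; exact hl i,
      fun hne => ?_, fun r hr => List.isChain_iff_pairwise.mpr (hs r hr), hp, fun i j _ hj _ => ?_⟩,
      hin⟩, hsh⟩
    · have hlen : T.rows.length - 1 < l.length := by
        rw [← hsh, List.length_map]
        exact Nat.sub_lt (List.length_pos_iff.mpr hne) one_pos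
      rw [hout, List.getD_eq_getElem _ _ hlen]
      exact (hpos _ (List.getElem_mem hlen)).ne'
    · have := hc i j (by simpa [outFn, h0] using hj)
      simpa [entry, h0] using this

end SkewTab

theorem partList_getD_succ_le {n : ℕ} (lam : n.Partition) (i : ℕ) :
    (partList lam).getD (i + 1) 0 ≤ (partList lam).getD i 0 := by
  have hs : (partList lam).Pairwise (fun a b => b ≤ a) := by
    rw [partList, List.pairwise_reverse]
    exact Multiset.pairwise_sort _ _
  rcases lt_or_ge (i + 1) (partList lam).length with hi | hi
  · rw [List.getD_eq_getElem _ _ hi, List.getD_eq_getElem _ _ (by omega)]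
    exact List.pairwise_iff_getElem.mp hs i (i + 1) (by omega) hi (by omega)
  · rw [List.getD_eq_default _ _ hi]; exact Nat.zero_le _

theorem partList_pos {n : ℕ} (lam : n.Partition) : ∀ x ∈ partList lam, 0 < x := by
  intro x hx
  exact lam.parts_pos (by simpa [partList] using hx)

theorem antitone_partList {n : ℕ} (lam : n.Partition) :
    Antitone fun i => ((partList lam).getD i 0 : ℤ) :=
  antitone_nat_of_succ_le fun i => by exact_mod_cast partList_getD_succ_le lam i

/-- Pairs of column strict tableaux of shapes `L` and `M` whose concatenated reading word is
lattice of content `ν`. -/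
abbrev IsLRPair (L M ν : List ℕ) (ST : SkewTab × SkewTab) : Prop :=
  ST.1.IsCST ∧ ST.2.IsCST ∧ ST.1.shape = L ∧ ST.2.shape = M ∧
    IsLatticeWord (ST.1.read ++ ST.2.read) ∧ HasContent (ST.1.read ++ ST.2.read) ν

theorem isLRPair_iff {L M ν : List ℕ} (hL : ∀ i, L.getD (i + 1) 0 ≤ L.getD i 0)
    (hL0 : ∀ x ∈ L, 0 < x) (hM : ∀ i, M.getD (i + 1) 0 ≤ M.getD i 0) (hM0 : ∀ x ∈ M, 0 < x)
    (ST : SkewTab × SkewTab) :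
    IsLRPair L M ν ST ↔
      ST.1.inn = List.replicate L.length 0 ∧ ST.2.inn = List.replicate M.length 0 ∧
        ST.1.rows.length = L.length ∧ IsFilling L.length (L ++ M) ν (ST.1.rows ++ ST.2.rows) := by
  obtain ⟨S, T⟩ := ST
  have hread : S.read ++ T.read = ((S.rows ++ T.rows).map List.reverse).flatten := by
    simp [SkewTab.read]
  have e : IsLRPair L M ν (S, T) ↔ (S.IsCST ∧ S.shape = L) ∧ (T.IsCST ∧ T.shape = M) ∧
      IsLatticeWord (S.read ++ T.read) ∧ HasContent (S.read ++ T.read) ν := by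
    simp only [IsLRPair]; tauto
  rw [e, SkewTab.isCST_and_shape_iff hL hL0, SkewTab.isCST_and_shape_iff hM hM0, hread]
  dsimp only
  constructor
  · rintro ⟨⟨hSi, hSl, hSs, hSp, hSc⟩, ⟨hTi, hTl, hTs, hTp, hTc⟩, hlat, hcon⟩
    have hSlen : S.rows.length = L.length := by rw [← hSl, List.length_map]
    have hTlen : T.rows.length = M.length := by rw [← hTl, List.length_map]
    refine ⟨hSlen ▸ hSi, hTlen ▸ hTi, hSlen, ⟨by simp [hSl, hTl], ?_, ?_, ?_, hlat, hcon⟩⟩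
    · intro r hr
      rcases List.mem_append.mp hr with hr | hr
      exacts [hSs r hr, hTs r hr]
    · intro r hr
      rcases List.mem_append.mp hr with hr | hr
      exacts [hSp r hr, hTp r hr]
    · intro i hia
      rcases lt_or_ge (i + 1) S.rows.length with hi | hi
      · rw [List.getD_append _ _ _ _ hi, List.getD_append _ _ _ _ (by omega)]
        exact hSc i
      · rw [List.getD_append_right _ _ _ _ hi, List.getD_append_right _ _ _ _ (by omega),
          show i + 1 - S.rows.length = (i - S.rows.length) + 1 by omega]
        exact hTc _
  · rintro ⟨hSi, hTi, hSlen, h⟩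
    have hlens := h.lens_eq
    rw [List.map_append] at hlens
    obtain ⟨hSl, hTl⟩ := List.append_inj hlens (by simpa using hSlen)
    have hTlen : T.rows.length = M.length := by rw [← hTl, List.length_map]
    refine ⟨⟨by rw [hSlen, hSi], hSl, fun r hr => h.sorted r (List.mem_append_left _ hr),
      fun r hr => h.pos r (List.mem_append_left _ hr), fun i j hj => ?_⟩,
      ⟨by rw [hTlen, hTi], hTl, fun r hr => h.sorted r (List.mem_append_right _ hr),
      fun r hr => h.pos r (List.mem_append_right _ hr), fun i j hj => ?_⟩, h.lattice, h.content⟩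
    · have hi : i + 1 < S.rows.length := by
        by_contra hge
        rw [List.getD_eq_default _ _ (by omega)] at hj
        simp at hj
      have := h.strict i (by omega) j
      rw [List.getD_append _ _ _ _ hi, List.getD_append _ _ _ _ (by omega)] at this
      exact this hj
    · have := h.strict (S.rows.length + i) (by omega) j
      rw [List.getD_append_right _ _ _ _ (by omega), List.getD_append_right _ _ _ _ (by omega),
        show S.rows.length + i + 1 - S.rows.length = i + 1 by omega,
        Nat.add_sub_cancel_left] at this
      exact this hj

theorem card_isLRPair {L M ν : List ℕ} (hL : ∀ i, L.getD (i + 1) 0 ≤ L.getD i 0)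
    (hL0 : ∀ x ∈ L, 0 < x) (hM : ∀ i, M.getD (i + 1) 0 ≤ M.getD i 0) (hM0 : ∀ x ∈ M, 0 < x) :
    Nat.card {ST : SkewTab × SkewTab // IsLRPair L M ν ST}
      = (goodChains ν.length L.length M.length (fun i => (L.getD i 0 : ℤ))
          (fun i => (M.getD i 0 : ℤ)) (fun k => (ν.getD k 0 : ℤ))).card := by
  have hiff := isLRPair_iff (ν := ν) hL hL0 hM hM0
  let f : {ST : SkewTab × SkewTab // IsLRPair L M ν ST} →
      {K // K ∈ goodChains ν.length L.length M.length (fun i => (L.getD i 0 : ℤ))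
        (fun i => (M.getD i 0 : ℤ)) (fun k => (ν.getD k 0 : ℤ))} := fun ST =>
    ⟨rowChain (ST.1.1.rows ++ ST.1.2.rows),
      ((hiff ST.1).mp ST.2).2.2.2.mem_goodChains (fun i _ => hL i) fun i _ => hM i⟩
  have hf : Function.Bijective f := by
    constructor
    · rintro ⟨⟨S, T⟩, h⟩ ⟨⟨S', T'⟩, h'⟩ heq
      obtain ⟨hSi, hTi, hlen, hfil⟩ := (hiff _).mp h
      obtain ⟨hSi', hTi', hlen', hfil'⟩ := (hiff _).mp h'
      have hlens := congrArg List.length (hfil.lens_eq.trans hfil'.lens_eq.symm)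
      rw [List.length_map, List.length_map] at hlens
      have hrows := eq_of_rowChain_eq hlens hfil.sorted hfil'.sorted hfil.pos hfil'.pos
        (congrArg Subtype.val heq)
      obtain ⟨h1, h2⟩ := List.append_inj hrows (hlen.trans hlen'.symm)
      obtain ⟨Si, Sr⟩ := S
      obtain ⟨Ti, Tr⟩ := T
      obtain ⟨Si', Sr'⟩ := S'
      obtain ⟨Ti', Tr'⟩ := T'
      simp only at hSi hTi hSi' hTi' h1 h2
      subst hSi hTi hSi' hTi' h1 h2
      rfl
    · rintro ⟨K, hK⟩
      have hfil := isFilling_rowsOfChain hK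
      have hRK := rowChain_rowsOfChain (mem_goodChains.mp hK).1
      set R := rowsOfChain ν.length (L.length + M.length) K with hR
      have hRlen : R.length = L.length + M.length := by simp [hR, rowsOfChain]
      refine ⟨⟨(⟨List.replicate L.length 0, R.take L.length⟩,
        ⟨List.replicate M.length 0, R.drop L.length⟩), (hiff _).mpr ⟨rfl, rfl, ?_, ?_⟩⟩, ?_⟩
      · simp [hRlen]
      · simpa using hfil
      · simpa [f] using hRK
  rw [Nat.card_eq_of_bijective f hf, Nat.card_eq_fintype_card, Fintype.card_coe]

end Tableaux

/-- the Littlewood–Richardson coefficient `c^ν_{λμ} = ⟨s_λ s_μ, s_ν⟩`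
counts pairs `(S,T)` of column strict tableaux of straight shapes `λ` and `μ` whose
concatenated reading word `read(S)read(T)` is lattice of content `ν`. -/
theorem lr_coefficient_pairs (p q n : ℕ) (lam : Nat.Partition p)
    (mu : Nat.Partition q) (nu : Nat.Partition n) (hpq : p + q = n) :
    hall (schur lam * schur mu) (schur nu)
      = (Nat.card {ST : SkewTab × SkewTab //
          ST.1.IsCST ∧ ST.2.IsCST ∧
          ST.1.shape = partList lam ∧ ST.2.shape = partList mu ∧
          IsLatticeWord (ST.1.read ++ ST.2.read) ∧
          HasContent (ST.1.read ++ ST.2.read) (partList nu)} : ℚ) := by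
  change hallBilin (schurList (partList lam) * schurList (partList mu)) (schurList (partList nu)) = _
  rw [schurList_eq_jtDet, schurList_eq_jtDet, schurList_eq_jtDet,
    hallBilin_jtDet_mul_jtDet_eq_card _ _ _ (antitone_partList lam) (antitone_partList mu)
      (antitone_partList nu) fun k hk => by rw [List.getD_eq_default _ _ hk]; rfl,
    ← card_isLRPair (partList_getD_succ_le lam) (partList_pos lam) (partList_getD_succ_le mu)
      (partList_pos mu)]
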